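/- arXiv:2509.21538 — 2 statements merged into one kernel-verified Lean document; each statement's English description precedes it below -/
import Mathlib

section
/- Number of positive boxes: for the N-vectorial Dirichlet GFF on Λ_n, let N^α_+ := #{ B ∈ Π_α ∩ 𝔹 : (h_B)^i > 0 for all 1 ≤ i ≤ N }. Then for any α ∈ (0,1) and ξ > 0, P_n[ N^α_+ ≤ n^{2(1−α)−ξ} ] → 0 as n → ∞. -/
open MeasureTheory Real Filter Asymptotics
open scoped ENNReal NNReal Classical BigOperators

noncomputable section

abbrev Site : Type := ℤ × ℤ

abbrev Spin (N : ℕ) : Type := EuclideanSpace ℝ (Fin N)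

abbrev Conf (N : ℕ) : Type := Site → Spin N

/-- `Λ_n = [-n/2, n/2]² ∩ ℤ²`. -/
def Lam (n : ℕ) : Finset Site :=
  (Finset.Icc (-(n : ℤ)) (n : ℤ) ×ˢ Finset.Icc (-(n : ℤ)) (n : ℤ)).filter
    (fun x => 2 * |x.1| ≤ (n : ℤ) ∧ 2 * |x.2| ≤ (n : ℤ))

/-- extension of a configuration on `Λ_n` by zero (Dirichlet boundary condition). -/
def extZero (n : ℕ) {N : ℕ} (ω : {x // x ∈ Lam n} → Spin N) : Conf N :=
  fun x => if h : x ∈ Lam n then ω ⟨x, h⟩ else 0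

/-- Dirichlet energy `(1/(8π)) Σ_{x∼y} |φ(x) - φ(y)|²`, i.e. coupling `𝔤 = 1/(2π)`;
the sum over the enlarged box `Λ_{n+4}` covers all nearest-neighbour edges meeting
`Λ_n ∪ ∂Λ_n` (edges not meeting `Λ_n` contribute `0` since `φ ≡ 0` there). -/
def dirEnergy (n N : ℕ) (φ : Conf N) : ℝ :=
  (1 / (8 * π)) *
    ∑ x ∈ Lam (n + 4), (‖φ x - φ (x + ((1 : ℤ), (0 : ℤ)))‖ ^ 2 +
      ‖φ x - φ (x + ((0 : ℤ), (1 : ℤ)))‖ ^ 2)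

def gffAux (n N : ℕ) : Measure ({x // x ∈ Lam n} → Spin N) :=
  (Measure.pi fun _ => (volume : Measure (Spin N))).withDensity
    (fun ω => ENNReal.ofReal (Real.exp (- dirEnergy n N (extZero n ω))))

/-- The law `P_n` of the `N`-vectorial Dirichlet GFF on `Λ_n`, viewed as a probability
measure on full configurations (extended by `0` outside `Λ_n`). -/
def gff (n N : ℕ) : Measure (Conf N) :=
  (gffAux n N Set.univ)⁻¹ • (gffAux n N).map (extZero n)

/-- conditional probability `μ[A | B]`. -/
def condProb {α : Type*} [MeasurableSpace α] (μ : Measure α) (B A : Set α) : ℝ≥0∞ :=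
  μ (A ∩ B) / μ B

/-- conditional expectation `E_μ[f | B]`. -/
def condExpOn {α : Type*} [MeasurableSpace α] (μ : Measure α) (B : Set α) (f : α → ℝ) : ℝ :=
  (∫ x in B, f x ∂μ) / (μ B).toReal

/-- `Λ = [-1/2,1/2]²`. -/
def unitSq : Set (ℝ × ℝ) := Set.Icc (-(1/2 : ℝ), -(1/2 : ℝ)) (1/2, 1/2)

/-- `D_n = (nD) ∩ ℤ²`. -/
def Dn (D : Set (ℝ × ℝ)) (n : ℕ) : Set Site :=
  {x | ((x.1 : ℝ) / n, (x.2 : ℝ) / n) ∈ D}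

/-- the event `Ω^I_V = {φ(x) ∉ I ∀ x ∈ V}`. -/
def avoids {N : ℕ} (V : Set Site) (I : Set (Spin N)) : Set (Conf N) :=
  {φ | ∀ x ∈ V, φ x ∉ I}

/-- the closest even integer to `n^α`. -/
def evenSide (n : ℕ) (α : ℝ) : ℤ := 2 * round ((n : ℝ) ^ α / 2)

/-- the discrete box of side length `a` centered at `c`. -/
def boxAt (a : ℤ) (c : Site) : Set Site :=
  {y | 2 * |y.1 - c.1| ≤ a ∧ 2 * |y.2 - c.2| ≤ a}

/-- the inner boundary of the discrete box of side length `a` centered at `c`. -/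
def innerBdryAt (a : ℤ) (c : Site) : Set Site :=
  {y | y ∈ boxAt a c ∧ (2 * |y.1 - c.1| = a ∨ 2 * |y.2 - c.2| = a)}

/-- `c` is a center of a box of `Π_α(x₀)`. -/
def isCenter (D : Set (ℝ × ℝ)) (n : ℕ) (α : ℝ) (x0 : Site) (c : Site) : Prop :=
  (∃ k l : ℤ, c = x0 + (k * evenSide n α, l * evenSide n α)) ∧
    boxAt (evenSide n α) c ⊆ Dn D n

/-- the centers of the boxes of `Π_α(x₀)`, as a finite set. -/
def centersF (D : Set (ℝ × ℝ)) (n : ℕ) (α : ℝ) (x0 : Site) : Finset Site :=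
  (Lam n).filter (fun c => isCenter D n α x0 c)

/-- `⨅_α(x₀)`, the union of the inner boundaries of the boxes of `Π_α(x₀)`. -/
def gridK (D : Set (ℝ × ℝ)) (n : ℕ) (α : ℝ) (x0 : Site) : Set Site :=
  ⋃ c ∈ centersF D n α x0, innerBdryAt (evenSide n α) c

/-- the σ-algebra generated by the coordinates in `K`. -/
def mGrid (N : ℕ) (K : Set Site) : MeasurableSpace (Conf N) :=
  MeasurableSpace.comap (fun φ (y : K) => φ y) inferInstance

/-- the harmonic extension `h^K(c) = E[φ(c) | F_K]` as a random variable. -/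
def harmExt (n N : ℕ) (K : Set Site) (c : Site) : Conf N → Spin N :=
  (gff n N)[fun ψ => ψ c | mGrid N K]

/-- covariance of two real random variables. -/
def covar {α : Type*} [MeasurableSpace α] (μ : Measure α) (X Y : α → ℝ) : ℝ :=
  ∫ ω, (X ω - ∫ ω', X ω' ∂μ) * (Y ω - ∫ ω', Y ω' ∂μ) ∂μ

/-- the lattice Euclidean ball `𝔹 = B²(0, ρ) ∩ ℤ²`. -/
def latBall (ρ : ℝ) : Set Site :=
  {x | Real.sqrt ((x.1 : ℝ) ^ 2 + (x.2 : ℝ) ^ 2) < ρ}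

/-- `N^α_+`: the number of boxes `B ∈ Π_α ∩ 𝔹` with all coordinates of `h_B` positive. -/
def countPos (D : Set (ℝ × ℝ)) (N n : ℕ) (α : ℝ) (ρ : ℝ) (φ : Conf N) : ℕ :=
  ((centersF D n α (0, 0)).filter (fun c =>
    boxAt (evenSide n α) c ⊆ latBall ρ ∧
      ∀ i : Fin N, 0 < harmExt n N (gridK D n α (0, 0)) c φ i)).card


section Helpers

/-! ### Part 1: the discrete Dirichlet form and the triangle estimate -/

def dH (f : Site → ℝ) (z : Site) : ℝ := f z - f (z + ((1 : ℤ), (0 : ℤ)))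
def dV (f : Site → ℝ) (z : Site) : ℝ := f z - f (z + ((0 : ℤ), (1 : ℤ)))

def gsq (f : Site → ℝ) (z : Site) : ℝ := dH f z ^ 2 + dV f z ^ 2

def en (n : ℕ) (f : Site → ℝ) : ℝ := ∑ x ∈ Lam (n + 4), gsq f x

lemma gsq_nonneg (f : Site → ℝ) (z : Site) : 0 ≤ gsq f z := by unfold gsq; positivity

lemma mem_Lam {n : ℕ} {x : Site} : x ∈ Lam n ↔ 2 * |x.1| ≤ (n : ℤ) ∧ 2 * |x.2| ≤ (n : ℤ) := by
  unfold Lam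
  simp only [Finset.mem_filter, Finset.mem_product, Finset.mem_Icc, and_iff_right_iff_imp]
  rintro ⟨h1, h2⟩
  have := abs_le.1 (show |x.1| ≤ (n : ℤ) by have := abs_nonneg x.1; omega)
  have := abs_le.1 (show |x.2| ≤ (n : ℤ) by have := abs_nonneg x.2; omega)
  omega

lemma sum_gsq_le_en {n : ℕ} {f : Site → ℝ} (hf : ∀ x, x ∉ Lam n → f x = 0) (T : Finset Site) :
    ∑ x ∈ T, gsq f x ≤ en n f := by
  have h0 : ∀ x, x ∉ Lam (n + 4) → gsq f x = 0 := by
    intro x hx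
    have a1 : x ∉ Lam n := by
      rw [mem_Lam] at hx ⊢; push_cast at hx; omega
    have a2 : x + ((1 : ℤ), (0 : ℤ)) ∉ Lam n := by
      rw [mem_Lam] at hx ⊢; push_cast at hx
      simp only [Prod.fst_add, Prod.snd_add, add_zero]
      have := abs_sub_abs_le_abs_sub (x.1 + 1) x.1
      have := abs_sub_abs_le_abs_sub x.1 (x.1 + 1)
      have h3 : |x.1 - (x.1 + 1)| = 1 := by rw [sub_add_cancel_left]; rfl
      omega
    have a3 : x + ((0 : ℤ), (1 : ℤ)) ∉ Lam n := by
      rw [mem_Lam] at hx ⊢; push_cast at hx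
      simp only [Prod.fst_add, Prod.snd_add, add_zero]
      have := abs_sub_abs_le_abs_sub x.2 (x.2 + 1)
      have h3 : |x.2 - (x.2 + 1)| = 1 := by rw [sub_add_cancel_left]; rfl
      omega
    simp [gsq, dH, dV, hf _ a1, hf _ a2, hf _ a3]
  unfold en
  calc ∑ x ∈ T, gsq f x ≤ ∑ x ∈ T ∪ Lam (n + 4), gsq f x :=
        Finset.sum_le_sum_of_subset_of_nonneg Finset.subset_union_left
          (fun x _ _ => gsq_nonneg f x)
    _ = ∑ x ∈ Lam (n + 4), gsq f x := by
        symm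
        apply Finset.sum_subset Finset.subset_union_right
        intro x _ hx; exact h0 x hx

/-- average of `f` over the vertical segment of length `j+1` at horizontal distance `j`. -/
def segAvg (f : Site → ℝ) (x : Site) (j : ℕ) : ℝ :=
  (1 / ((j : ℝ) + 1)) * ∑ i ∈ Finset.range (j + 1), f (x + ((j : ℤ), (i : ℤ)))

lemma segAvg_zero (f : Site → ℝ) (x : Site) : segAvg f x 0 = f x := by
  simp only [segAvg, Nat.cast_zero, zero_add, Finset.sum_range_one]
  have : x + ((0 : ℤ), (0 : ℤ)) = x := by ext <;> simp
  rw [this]; simp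

lemma seq_ident (u w : ℕ → ℝ) (m : ℕ) :
    (1 / ((m : ℝ) + 1)) * ∑ i ∈ Finset.range (m + 1), u i - (1 / (m : ℝ)) * ∑ i ∈ Finset.range m, w i
      = ∑ i ∈ Finset.range m, ((1 / (m : ℝ)) * (u i - w i)
          + (((i : ℝ) + 1) / ((m : ℝ) * (m + 1))) * (u (i + 1) - u i)) ∨ m = 0 := by
  rcases Nat.eq_zero_or_pos m with h | h
  · right; exact h
  left
  have key : ∀ k : ℕ, ∑ i ∈ Finset.range k, ((i : ℝ) + 1) * (u (i + 1) - u i)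
      = (k : ℝ) * u k - ∑ i ∈ Finset.range k, u i := by
    intro k
    induction k with
    | zero => simp
    | succ k ih => rw [Finset.sum_range_succ, ih, Finset.sum_range_succ]; push_cast; ring
  have hm : (m : ℝ) ≠ 0 := by positivity
  have hm1 : (m : ℝ) + 1 ≠ 0 := by positivity
  rw [Finset.sum_add_distrib, ← Finset.mul_sum, Finset.sum_sub_distrib, Finset.sum_range_succ]
  have : ∑ i ∈ Finset.range m, (((i : ℝ) + 1) / ((m : ℝ) * (m + 1))) * (u (i + 1) - u i)
      = (1 / ((m : ℝ) * (m + 1))) * ∑ i ∈ Finset.range m, ((i : ℝ) + 1) * (u (i + 1) - u i) := by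
    rw [Finset.mul_sum]; apply Finset.sum_congr rfl; intro i _; ring
  rw [this, key]
  field_simp
  ring

lemma strip (f : Site → ℝ) (x : Site) (j : ℕ) :
    (segAvg f x (j + 1) - segAvg f x j) ^ 2 ≤ (2 / ((j : ℝ) + 1)) *
      ∑ i ∈ Finset.range (j + 1), (dH f (x + ((j : ℤ), (i : ℤ))) ^ 2
        + dV f (x + (((j + 1 : ℕ) : ℤ), (i : ℤ))) ^ 2) := by
  set u : ℕ → ℝ := fun i => f (x + (((j + 1 : ℕ) : ℤ), (i : ℤ))) with hu
  set w : ℕ → ℝ := fun i => f (x + ((j : ℤ), (i : ℤ))) with hw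
  have hid := (seq_ident u w (j + 1)).resolve_right (by omega)
  have hl : segAvg f x (j + 1) - segAvg f x j =
      ∑ i ∈ Finset.range (j + 1), ((1 / ((j + 1 : ℕ) : ℝ)) * (u i - w i)
          + (((i : ℝ) + 1) / (((j + 1 : ℕ) : ℝ) * ((j + 1 : ℕ) + 1))) * (u (i + 1) - u i)) := by
    rw [← hid]; simp only [segAvg, hu, hw]; push_cast; rfl
  rw [hl]
  have hd1 : ∀ i : ℕ, dH f (x + ((j : ℤ), (i : ℤ))) = - (u i - w i) := by
    intro i
    simp only [dH, hu, hw]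
    have : x + ((j : ℤ), (i : ℤ)) + ((1 : ℤ), (0 : ℤ)) = x + (((j + 1 : ℕ) : ℤ), (i : ℤ)) := by
      ext <;> simp <;> ring
    rw [this]; ring
  have hd2 : ∀ i : ℕ, dV f (x + (((j + 1 : ℕ) : ℤ), (i : ℤ))) = - (u (i + 1) - u i) := by
    intro i
    simp only [dV, hu]
    have : x + (((j + 1 : ℕ) : ℤ), (i : ℤ)) + ((0 : ℤ), (1 : ℤ))
        = x + (((j + 1 : ℕ) : ℤ), ((i + 1 : ℕ) : ℤ)) := by
      ext <;> simp; ring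
    rw [this]; ring
  have hcs := sq_sum_le_card_mul_sum_sq (s := Finset.range (j + 1))
    (f := fun i => ((1 / ((j + 1 : ℕ) : ℝ)) * (u i - w i)
          + (((i : ℝ) + 1) / (((j + 1 : ℕ) : ℝ) * ((j + 1 : ℕ) + 1))) * (u (i + 1) - u i)))
  refine hcs.trans ?_
  rw [Finset.card_range]
  have hterm : ∀ i ∈ Finset.range (j + 1), ((1 / ((j + 1 : ℕ) : ℝ)) * (u i - w i)
          + (((i : ℝ) + 1) / (((j + 1 : ℕ) : ℝ) * ((j + 1 : ℕ) + 1))) * (u (i + 1) - u i)) ^ 2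
      ≤ (2 / ((j + 1 : ℕ) : ℝ) ^ 2) * (dH f (x + ((j : ℤ), (i : ℤ))) ^ 2
        + dV f (x + (((j + 1 : ℕ) : ℤ), (i : ℤ))) ^ 2) := by
    intro i hi
    rw [Finset.mem_range] at hi
    rw [hd1, hd2, neg_sq, neg_sq]
    set p := u i - w i
    set q := u (i + 1) - u i
    have hm : (0 : ℝ) < ((j + 1 : ℕ) : ℝ) := by positivity
    set m := ((j + 1 : ℕ) : ℝ) with hmdef
    have hi' : (i : ℝ) + 1 ≤ m := by rw [hmdef]; exact_mod_cast hi
    have hi0 : (0 : ℝ) ≤ (i : ℝ) + 1 := by positivity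
    set t := ((i : ℝ) + 1) / (m + 1) with ht
    have ht0 : 0 ≤ t := by positivity
    have ht1 : t ≤ 1 := by rw [ht, div_le_one (by positivity)]; linarith
    have e1 : (1 / m) * p + (((i : ℝ) + 1) / (m * (m + 1))) * q = (1 / m) * (p + t * q) := by
      rw [ht]; field_simp
    rw [e1, mul_pow]
    have e2 : (2 / m ^ 2) * (p ^ 2 + q ^ 2) = (1 / m) ^ 2 * (2 * (p ^ 2 + q ^ 2)) := by
      field_simp
    rw [e2]
    apply mul_le_mul_of_nonneg_left _ (by positivity)
    have : (t * q) ^ 2 ≤ q ^ 2 := by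
      rw [mul_pow]; have : t ^ 2 ≤ 1 := by nlinarith
      nlinarith [sq_nonneg q]
    nlinarith [sq_nonneg (p - t * q)]
  refine (mul_le_mul_of_nonneg_left (Finset.sum_le_sum hterm) (by positivity)).trans ?_
  rw [← Finset.mul_sum, ← mul_assoc]
  apply le_of_eq
  congr 1
  push_cast
  field_simp

/-- lattice square with lower left corner `x` and side `J`. -/
def sqr (x : Site) (J : ℕ) : Finset Site :=
  Finset.Icc x.1 (x.1 + J) ×ˢ Finset.Icc x.2 (x.2 + J)

lemma triangle (f : Site → ℝ) (x : Site) (j₀ J : ℕ) (h : j₀ ≤ J) :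
    (segAvg f x J - segAvg f x j₀) ^ 2 ≤ (∑ j ∈ Finset.Ico j₀ J, (2 / ((j : ℝ) + 1))) *
      ∑ z ∈ sqr x J, gsq f z := by
  have htel : segAvg f x J - segAvg f x j₀ =
      ∑ j ∈ Finset.Ico j₀ J, (segAvg f x (j + 1) - segAvg f x j) :=
    (Finset.sum_Ico_sub (segAvg f x) h).symm
  set Q : ℕ → ℝ := fun j => ∑ i ∈ Finset.range (j + 1), (dH f (x + ((j : ℤ), (i : ℤ))) ^ 2
        + dV f (x + (((j + 1 : ℕ) : ℤ), (i : ℤ))) ^ 2) with hQ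
  have hQ0 : ∀ j, 0 ≤ Q j := fun j => Finset.sum_nonneg (fun i _ => by positivity)
  have h1 : (∑ j ∈ Finset.Ico j₀ J, (segAvg f x (j + 1) - segAvg f x j)) ^ 2 ≤
      (∑ j ∈ Finset.Ico j₀ J, (2 / ((j : ℝ) + 1))) * ∑ j ∈ Finset.Ico j₀ J, Q j := by
    apply Finset.sum_sq_le_sum_mul_sum_of_sq_le_mul
    · intro i _; positivity
    · intro i _; exact hQ0 i
    · intro j _; exact strip f x j
  rw [htel]
  refine h1.trans (mul_le_mul_of_nonneg_left ?_ (Finset.sum_nonneg fun j _ => by positivity))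
  have e1 : ∑ j ∈ Finset.Ico j₀ J, Q j =
      ∑ j ∈ Finset.Ico j₀ J, ∑ i ∈ Finset.range (j + 1), dH f (x + ((j : ℤ), (i : ℤ))) ^ 2 +
      ∑ j ∈ Finset.Ico j₀ J, ∑ i ∈ Finset.range (j + 1),
        dV f (x + (((j + 1 : ℕ) : ℤ), (i : ℤ))) ^ 2 := by
    rw [← Finset.sum_add_distrib]
    apply Finset.sum_congr rfl; intro j _
    rw [hQ]; simp only; rw [Finset.sum_add_distrib]
  have e2 : ∑ z ∈ sqr x J, gsq f z = ∑ z ∈ sqr x J, dH f z ^ 2 + ∑ z ∈ sqr x J, dV f z ^ 2 := by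
    rw [← Finset.sum_add_distrib]; rfl
  have gen : ∀ (g : Site → ℝ) (hg : ∀ z, 0 ≤ g z) (s : ℕ) (hs : s ≤ 1),
      ∑ j ∈ Finset.Ico j₀ J, ∑ i ∈ Finset.range (j + 1), g (x + (((j + s : ℕ) : ℤ), (i : ℤ)))
      ≤ ∑ z ∈ sqr x J, g z := by
    intro g hg s hs
    rw [Finset.sum_sigma']
    have hinj : Set.InjOn (fun p : (_ : ℕ) × ℕ => x + (((p.1 + s : ℕ) : ℤ), (p.2 : ℤ)))
        ((Finset.Ico j₀ J).sigma (fun j => Finset.range (j + 1)) : Finset ((_ : ℕ) × ℕ)) := by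
      rintro ⟨a, b⟩ _ ⟨c, d⟩ _ hh
      simp only [add_right_inj, Prod.mk.injEq] at hh
      obtain ⟨h1, h2⟩ := hh
      have h3 : a = c := by omega
      have h4 : b = d := by omega
      subst h3; subst h4; rfl
    have hi := Finset.sum_image (f := g) hinj
    rw [← hi]
    apply Finset.sum_le_sum_of_subset_of_nonneg
    · intro z hz
      simp only [Finset.mem_image, Finset.mem_sigma, Finset.mem_Ico, Finset.mem_range] at hz
      obtain ⟨⟨a, b⟩, ⟨hab, hb⟩, rfl⟩ := hz
      simp only [sqr, Finset.mem_product, Finset.mem_Icc, Prod.fst_add, Prod.snd_add]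
      simp only at hab hb
      omega
    · intro z _ _; exact hg z
  rw [e1, e2]
  exact add_le_add (gen (fun z => dH f z ^ 2) (fun z => by positivity) 0 (by omega))
    (gen (fun z => dV f z ^ 2) (fun z => by positivity) 1 (by omega))

lemma segAvg_exit {n : ℕ} {f : Site → ℝ} (hf : ∀ x, x ∉ Lam n → f x = 0) {x : Site}
    (hx : x ∈ Lam n) : segAvg f x (n + 1) = 0 := by
  unfold segAvg
  rw [Finset.sum_eq_zero, mul_zero]
  intro i _
  apply hf
  rw [mem_Lam] at hx ⊢
  simp only [Prod.fst_add]
  intro h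
  have h1 := (abs_le.1 (show |x.1 + ((n + 1 : ℕ) : ℤ)| ≤ n by
    have := abs_nonneg (x.1 + ((n + 1 : ℕ) : ℤ)); omega)).2
  have h2 := neg_abs_le x.1
  have h3 := le_abs_self (x.1 + ((n + 1 : ℕ) : ℤ))
  push_cast at *
  omega

lemma harm_le_log (a b : ℕ) (ha : 1 ≤ a) (hab : a ≤ b) :
    ∑ j ∈ Finset.Ico a b, (2 / ((j : ℝ) + 1)) ≤ 2 * (Real.log b - Real.log a) := by
  induction b, hab using Nat.le_induction with
  | base => simp
  | succ k hk ih =>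
    rw [Finset.sum_Ico_succ_top hk]
    have hk0 : (0 : ℝ) < k := by exact_mod_cast (by omega : 0 < k)
    have : 1 / ((k : ℝ) + 1) ≤ Real.log ((k + 1 : ℕ) : ℝ) - Real.log k := by
      rw [← Real.log_div (by positivity) (by positivity)]
      have := Real.one_sub_inv_le_log_of_pos (x := ((k + 1 : ℕ) : ℝ) / k) (by positivity)
      refine le_trans (le_of_eq ?_) this
      push_cast; field_simp; ring
    have e : (2 : ℝ) / (k + 1) = 2 * (1 / (k + 1)) := by ring
    rw [e]; linarith

lemma harm_ge_log (a b : ℕ) (ha : 1 ≤ a) (hab : a ≤ b) :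
    Real.log b - Real.log a ≤ ∑ j ∈ Finset.Ico a b, (1 / (j : ℝ)) := by
  induction b, hab using Nat.le_induction with
  | base => simp
  | succ k hk ih =>
    rw [Finset.sum_Ico_succ_top hk]
    have hk0 : (0 : ℝ) < k := by exact_mod_cast (by omega : 0 < k)
    have : Real.log ((k + 1 : ℕ) : ℝ) - Real.log k ≤ 1 / (k : ℝ) := by
      rw [← Real.log_div (by positivity) (by positivity)]
      have := Real.log_le_sub_one_of_pos (x := ((k + 1 : ℕ) : ℝ) / k) (by positivity)
      refine le_trans this (le_of_eq ?_)
      push_cast; field_simp; ring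
    linarith

lemma pt_bound {n : ℕ} {f : Site → ℝ} (hf : ∀ x, x ∉ Lam n → f x = 0) (x : Site) :
    f x ^ 2 ≤ (∑ j ∈ Finset.Ico 0 (n + 1), (2 / ((j : ℝ) + 1))) * en n f := by
  have hnn : 0 ≤ ∑ j ∈ Finset.Ico 0 (n + 1), (2 / ((j : ℝ) + 1)) :=
    Finset.sum_nonneg fun j _ => by positivity
  by_cases hx : x ∈ Lam n
  · have := triangle f x 0 (n + 1) (by omega)
    rw [segAvg_exit hf hx, segAvg_zero, zero_sub, neg_sq] at this
    exact this.trans (mul_le_mul_of_nonneg_left (sum_gsq_le_en hf _) hnn)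
  · rw [hf x hx]
    have : 0 ≤ en n f := Finset.sum_nonneg fun _ _ => gsq_nonneg _ _
    simpa using mul_nonneg hnn this

/-! ### Part 2: averaged upper bound and capacity test function -/

def gpt (a : ℕ) (p : ℕ × ℕ) : Site := ((p.1 : ℤ) * a, (p.2 : ℤ) * a)

def gidx (m : ℕ) : Finset (ℕ × ℕ) := Finset.range m ×ˢ Finset.range m

lemma card_1d (a q m : ℕ) (ha : 1 ≤ a) (z : ℤ) :
    ((Finset.range m).filter (fun k : ℕ => (k : ℤ) * a ≤ z ∧ z ≤ (k : ℤ) * a + (a * q : ℕ))).card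
      ≤ q + 1 := by
  have hcard : (Finset.Icc (z / a - q) (z / a)).card = q + 1 := by
    rw [Int.card_Icc]; omega
  rw [← hcard]
  apply Finset.card_le_card_of_injOn (fun k : ℕ => (k : ℤ))
  · intro k hk
    have ha' : (0 : ℤ) < a := by exact_mod_cast ha
    simp only [Finset.coe_filter, Finset.mem_range, Set.mem_ofPred_eq] at hk
    simp only [Finset.coe_Icc, Set.mem_Icc]
    obtain ⟨_, h1, h2⟩ := hk
    constructor
    · have : z / a ≤ k + q := by
        apply Int.le_of_lt_add_one
        rw [Int.ediv_lt_iff_lt_mul ha']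
        push_cast at h2
        nlinarith
      omega
    · rw [Int.le_ediv_iff_mul_le ha']; exact h1
  · intro x _ y _ h; exact Int.ofNat_injective h

lemma overlap {n : ℕ} {f : Site → ℝ} (hf : ∀ x, x ∉ Lam n → f x = 0) (a q m : ℕ) (ha : 1 ≤ a) :
    ∑ p ∈ gidx m, ∑ z ∈ sqr (gpt a p) (a * q), gsq f z ≤ ((q : ℝ) + 1) ^ 2 * en n f := by
  set T := (gidx m).biUnion (fun p => sqr (gpt a p) (a * q)) with hT
  have h1 : ∀ p ∈ gidx m, ∑ z ∈ sqr (gpt a p) (a * q), gsq f z =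
      ∑ z ∈ T, if z ∈ sqr (gpt a p) (a * q) then gsq f z else 0 := by
    intro p hp
    rw [← Finset.sum_filter]
    apply Finset.sum_congr _ (fun _ _ => rfl)
    ext z
    simp only [Finset.mem_filter, hT, Finset.mem_biUnion]
    exact ⟨fun h => ⟨⟨p, hp, h⟩, h⟩, fun h => h.2⟩
  rw [Finset.sum_congr rfl h1, Finset.sum_comm]
  calc ∑ z ∈ T, ∑ p ∈ gidx m, (if z ∈ sqr (gpt a p) (a * q) then gsq f z else 0)
      ≤ ∑ z ∈ T, ((q : ℝ) + 1) ^ 2 * gsq f z := by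
        apply Finset.sum_le_sum
        intro z _
        rw [← Finset.sum_filter, Finset.sum_const, nsmul_eq_mul]
        apply mul_le_mul_of_nonneg_right _ (gsq_nonneg f z)
        have hsub : (gidx m).filter (fun p => z ∈ sqr (gpt a p) (a * q)) ⊆
            ((Finset.range m).filter
              (fun k : ℕ => (k : ℤ) * a ≤ z.1 ∧ z.1 ≤ (k : ℤ) * a + (a * q : ℕ))) ×ˢ
            ((Finset.range m).filter
              (fun k : ℕ => (k : ℤ) * a ≤ z.2 ∧ z.2 ≤ (k : ℤ) * a + (a * q : ℕ))) := by
          intro p hp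
          simp only [gidx, sqr, gpt, Finset.mem_filter, Finset.mem_product, Finset.mem_Icc] at hp ⊢
          tauto
        have hc := Finset.card_le_card hsub
        rw [Finset.card_product] at hc
        have := hc.trans (Nat.mul_le_mul (card_1d a q m ha z.1) (card_1d a q m ha z.2))
        rw [pow_two]; exact_mod_cast this
    _ = ((q : ℝ) + 1) ^ 2 * ∑ z ∈ T, gsq f z := by rw [Finset.mul_sum]
    _ ≤ _ := mul_le_mul_of_nonneg_left (sum_gsq_le_en hf T) (by positivity)

lemma avg_bound {n : ℕ} {f : Site → ℝ} (hf : ∀ x, x ∉ Lam n → f x = 0) (a q m : ℕ)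
    (ha : 1 ≤ a) (hq : 1 ≤ q) (haq : a * q ≤ n + 1) (hS : ∀ p ∈ gidx m, gpt a p ∈ Lam n) :
    ∑ p ∈ gidx m, f (gpt a p) ^ 2 ≤
      (4 * (1 + Real.log (n + 1)) * ((q : ℝ) + 1) ^ 2
        + 4 * (m : ℝ) ^ 2 * (Real.log (n + 1) - Real.log (a * q))) * en n f := by
  have haq1 : 1 ≤ a * q := Nat.mul_pos ha hq
  have hen : 0 ≤ en n f := Finset.sum_nonneg fun _ _ => gsq_nonneg _ _
  have hlog : Real.log ((a : ℝ) * q) ≤ Real.log (n + 1) := by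
    apply Real.log_le_log
    · exact_mod_cast haq1
    · exact_mod_cast haq
  have hA : ∑ j ∈ Finset.Ico 0 (a * q), (2 / ((j : ℝ) + 1)) ≤ 2 * (1 + Real.log (n + 1)) := by
    rw [Finset.sum_eq_sum_Ico_succ_bot (by omega)]
    have := harm_le_log 1 (a * q) le_rfl haq1
    push_cast at this
    simp only [Real.log_one, sub_zero] at this
    norm_num
    linarith
  have hB : ∑ j ∈ Finset.Ico (a * q) (n + 1), (2 / ((j : ℝ) + 1)) ≤
      2 * (Real.log (n + 1) - Real.log (a * q)) := by
    have := harm_le_log (a * q) (n + 1) haq1 haq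
    push_cast at this
    exact this
  have hp : ∀ p ∈ gidx m, f (gpt a p) ^ 2 ≤
      4 * (1 + Real.log (n + 1)) * ∑ z ∈ sqr (gpt a p) (a * q), gsq f z +
      4 * (Real.log (n + 1) - Real.log (a * q)) * en n f := by
    intro p hp
    have t1 := triangle f (gpt a p) 0 (a * q) (by omega)
    have t2 := triangle f (gpt a p) (a * q) (n + 1) haq
    rw [segAvg_zero] at t1
    rw [segAvg_exit hf (hS p hp)] at t2
    have s0 : 0 ≤ ∑ z ∈ sqr (gpt a p) (a * q), gsq f z :=
      Finset.sum_nonneg fun _ _ => gsq_nonneg _ _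
    have s1 : 0 ≤ ∑ z ∈ sqr (gpt a p) (n + 1), gsq f z :=
      Finset.sum_nonneg fun _ _ => gsq_nonneg _ _
    have t1' := t1.trans (mul_le_mul_of_nonneg_right hA s0)
    have t2' := (t2.trans (mul_le_mul_of_nonneg_right hB s1)).trans
      (mul_le_mul_of_nonneg_left (sum_gsq_le_en hf _) (by linarith))
    nlinarith [sq_nonneg (segAvg f (gpt a p) (a * q) - f (gpt a p) + segAvg f (gpt a p) (a * q))]
  refine (Finset.sum_le_sum hp).trans ?_
  rw [Finset.sum_add_distrib, ← Finset.mul_sum, Finset.sum_const, nsmul_eq_mul]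
  have hcard : ((gidx m).card : ℝ) = (m : ℝ) ^ 2 := by
    simp [gidx, pow_two]
  rw [hcard]
  have hlog0 : 0 ≤ Real.log ((n : ℝ) + 1) := Real.log_nonneg (by linarith [Nat.cast_nonneg (α := ℝ) n])
  have := mul_le_mul_of_nonneg_left (overlap hf a q m ha)
    (show 0 ≤ 4 * (1 + Real.log ((n : ℝ) + 1)) by positivity)
  linarith

def nd (c z : Site) : ℕ := max (z.1 - c.1).natAbs (z.2 - c.2).natAbs

def tg (s R t : ℕ) : ℝ := ∑ j ∈ Finset.Ico (max t s) R, (1 / (j : ℝ))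

def testF (s R : ℕ) (c : Site) (z : Site) : ℝ := tg s R (nd c z)

lemma tg_step (s R : ℕ) (t : ℕ) : (tg s R t - tg s R (t + 1)) =
    if s ≤ t ∧ t < R then 1 / (t : ℝ) else 0 := by
  unfold tg
  split_ifs with h
  · rw [max_eq_left h.1, max_eq_left (by omega), Finset.sum_eq_sum_Ico_succ_bot h.2]
    ring
  · rcases not_and_or.1 h with h1 | h1
    · rw [max_eq_right (by omega), max_eq_right (by omega), sub_self]
    · rw [Finset.Ico_eq_empty, Finset.Ico_eq_empty, sub_self]
      · simp; omega
      · simp; omega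

lemma tg_diff (s R : ℕ) (hs : 2 ≤ s) (t u : ℕ) (h1 : t ≤ u + 1) (h2 : u ≤ t + 1) :
    (tg s R t - tg s R u) ^ 2 ≤ if s ≤ t ∧ t ≤ R then 4 / (t : ℝ) ^ 2 else 0 := by
  have hnn : (0 : ℝ) ≤ if s ≤ t ∧ t ≤ R then 4 / (t : ℝ) ^ 2 else 0 := by
    split_ifs <;> positivity
  rcases lt_trichotomy t u with h | h | h
  · obtain rfl : u = t + 1 := by omega
    rw [tg_step]
    split_ifs with h3 h4 h5
    · rw [div_pow]; gcongr; norm_num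
    · omega
    · simp; positivity
    · simp
  · subst h; simpa using hnn
  · obtain rfl : t = u + 1 := by omega
    rw [← neg_sq, neg_sub, tg_step]
    by_cases h3 : s ≤ u ∧ u < R
    · rw [if_pos h3, if_pos (by omega)]
      have hu : (2 : ℝ) ≤ u := by exact_mod_cast (by omega : 2 ≤ u)
      push_cast
      rw [div_pow, div_le_div_iff₀ (by positivity) (by positivity)]
      nlinarith
    · rw [if_neg h3]
      simpa using hnn

lemma card_sphere (T : Finset Site) (c : Site) (t : ℕ) (ht : 2 ≤ t) :
    (T.filter (fun z => nd c z = t)).card ≤ 10 * t := by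
  have hsub : T.filter (fun z => nd c z = t) ⊆
      (({c.1 + t, c.1 - t} : Finset ℤ) ×ˢ Finset.Icc (c.2 - t) (c.2 + t)) ∪
      (Finset.Icc (c.1 - t) (c.1 + t) ×ˢ ({c.2 + t, c.2 - t} : Finset ℤ)) := by
    intro z hz
    rw [Finset.mem_filter] at hz
    simp only [nd] at hz
    simp only [Finset.mem_union, Finset.mem_product, Finset.mem_insert, Finset.mem_singleton,
      Finset.mem_Icc]
    omega
  refine (Finset.card_le_card hsub).trans ((Finset.card_union_le _ _).trans ?_)
  rw [Finset.card_product, Finset.card_product, Int.card_Icc, Int.card_Icc]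
  have h1 : ({c.1 + (t : ℤ), c.1 - t} : Finset ℤ).card ≤ 2 := Finset.card_le_two
  have h2 : ({c.2 + (t : ℤ), c.2 - t} : Finset ℤ).card ≤ 2 := Finset.card_le_two
  have e1 : (c.2 + t + 1 - (c.2 - t) : ℤ).toNat = 2 * t + 1 := by omega
  have e2 : (c.1 + t + 1 - (c.1 - t) : ℤ).toNat = 2 * t + 1 := by omega
  rw [e1, e2]
  nlinarith

lemma testF_energy (n s R : ℕ) (hs : 2 ≤ s) (hR : s < R) (c : Site) :
    en n (testF s R c) ≤ 160 * ∑ j ∈ Finset.Ico s R, (1 / (j : ℝ)) := by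
  have hpt : ∀ z, gsq (testF s R c) z ≤
      if s ≤ nd c z ∧ nd c z ≤ R then 8 / (nd c z : ℝ) ^ 2 else 0 := by
    intro z
    have a1 := tg_diff s R hs (nd c z) (nd c (z + ((1 : ℤ), (0 : ℤ))))
      (by simp only [nd, Prod.fst_add, Prod.snd_add]; omega)
      (by simp only [nd, Prod.fst_add, Prod.snd_add]; omega)
    have a2 := tg_diff s R hs (nd c z) (nd c (z + ((0 : ℤ), (1 : ℤ))))
      (by simp only [nd, Prod.fst_add, Prod.snd_add]; omega)
      (by simp only [nd, Prod.fst_add, Prod.snd_add]; omega)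
    have := add_le_add a1 a2
    refine le_trans this (le_of_eq ?_)
    split_ifs
    · ring
    · ring
  have h1 : en n (testF s R c) ≤ ∑ z ∈ (Lam (n + 4)).filter
      (fun z => nd c z ∈ Finset.Icc s R), 8 / (nd c z : ℝ) ^ 2 := by
    unfold en
    refine (Finset.sum_le_sum fun z _ => hpt z).trans (le_of_eq ?_)
    rw [Finset.sum_filter]
    apply Finset.sum_congr rfl
    intro z _
    simp only [Finset.mem_Icc]
  have h2 : ∑ z ∈ (Lam (n + 4)).filter
      (fun z => nd c z ∈ Finset.Icc s R), 8 / (nd c z : ℝ) ^ 2 ≤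
      ∑ t ∈ Finset.Icc s R, 80 * (1 / (t : ℝ)) := by
    rw [← Finset.sum_fiberwise_of_maps_to (s := (Lam (n + 4)).filter
      (fun z => nd c z ∈ Finset.Icc s R)) (t := Finset.Icc s R) (g := nd c)
      (fun z hz => (Finset.mem_filter.1 hz).2)]
    apply Finset.sum_le_sum
    intro t ht
    have ht2 : 2 ≤ t := by have := (Finset.mem_Icc.1 ht).1; omega
    have : ∀ z ∈ ((Lam (n + 4)).filter (fun z => nd c z ∈ Finset.Icc s R)).filter
        (fun z => nd c z = t), 8 / (nd c z : ℝ) ^ 2 = 8 / (t : ℝ) ^ 2 := by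
      intro z hz; rw [(Finset.mem_filter.1 hz).2]
    rw [Finset.sum_congr rfl this, Finset.sum_const, nsmul_eq_mul]
    have hc := card_sphere ((Lam (n + 4)).filter (fun z => nd c z ∈ Finset.Icc s R)) c t ht2
    have hc' : ((((Lam (n + 4)).filter (fun z => nd c z ∈ Finset.Icc s R)).filter
        (fun z => nd c z = t)).card : ℝ) ≤ 10 * t := by exact_mod_cast hc
    have ht0 : (0 : ℝ) < t := by exact_mod_cast (by omega : 0 < t)
    refine (mul_le_mul_of_nonneg_right hc' (by positivity)).trans (le_of_eq ?_)
    field_simp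
    norm_num
  refine (h1.trans h2).trans ?_
  rw [← Finset.mul_sum, ← Finset.Ico_succ_right_eq_Icc, Order.succ_eq_add_one,
    Finset.sum_Ico_succ_top hR.le]
  have hs0 : (0 : ℝ) < s := by exact_mod_cast (by omega : 0 < s)
  have h3 : 1 / (R : ℝ) ≤ 1 / (s : ℝ) := by
    apply one_div_le_one_div_of_le hs0; exact_mod_cast hR.le
  have h4 : 1 / (s : ℝ) ≤ ∑ j ∈ Finset.Ico s R, (1 / (j : ℝ)) :=
    Finset.single_le_sum (f := fun j : ℕ => 1 / (j : ℝ)) (fun i _ => by positivity)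
      (Finset.mem_Ico.2 ⟨le_rfl, hR⟩)
  linarith

lemma testF_const (s R : ℕ) (c z : Site) (h : nd c z ≤ s) :
    testF s R c z = ∑ j ∈ Finset.Ico s R, (1 / (j : ℝ)) := by
  simp [testF, tg, h]

lemma testF_zero (s R : ℕ) (c z : Site) (h : R ≤ nd c z) :
    testF s R c z = 0 := by
  unfold testF tg
  rw [Finset.Ico_eq_empty, Finset.sum_empty]
  simp; omega

/-! ### Part 3: the Hilbert space of functions with the Dirichlet energy -/

def HS (n : ℕ) : Type := {x // x ∈ Lam n} → ℝ

instance (n : ℕ) : AddCommGroup (HS n) := inferInstanceAs (AddCommGroup ({x // x ∈ Lam n} → ℝ))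
instance (n : ℕ) : Module ℝ (HS n) := inferInstanceAs (Module ℝ ({x // x ∈ Lam n} → ℝ))
instance (n : ℕ) : Module.Finite ℝ (HS n) :=
  inferInstanceAs (Module.Finite ℝ ({x // x ∈ Lam n} → ℝ))

def ext0 (n : ℕ) : HS n →ₗ[ℝ] (Site → ℝ) where
  toFun f := fun x => if h : x ∈ Lam n then f ⟨x, h⟩ else 0
  map_add' f g := by
    funext x
    by_cases h : x ∈ Lam n
    · simp only [h, dite_true, Pi.add_apply]; rfl
    · simp [h]
  map_smul' c f := by
    funext x
    by_cases h : x ∈ Lam n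
    · simp only [h, dite_true, Pi.smul_apply]; rfl
    · simp [h]

lemma ext0_out {n : ℕ} (f : HS n) : ∀ x, x ∉ Lam n → ext0 n f x = 0 := by
  intro x hx; simp [ext0, hx]

lemma ext0_in {n : ℕ} (f : HS n) (x : {x // x ∈ Lam n}) : ext0 n f x = f x := by
  simp [ext0, x.2]

lemma ext0_inj {n : ℕ} {f g : HS n} (h : ∀ x, ext0 n f x = ext0 n g x) : f = g := by
  refine funext fun x => ?_
  have := h x
  rwa [ext0_in, ext0_in] at this

def mkHS (n : ℕ) (F : Site → ℝ) : HS n := fun x => F x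

lemma ext0_mk {n : ℕ} {F : Site → ℝ} (hF : ∀ x, x ∉ Lam n → F x = 0) : ext0 n (mkHS n F) = F := by
  funext x
  by_cases h : x ∈ Lam n
  · simp [ext0, h, mkHS]
  · simp [ext0, h, hF x h]

def edgeP (f g : Site → ℝ) (z : Site) : ℝ := dH f z * dH g z + dV f z * dV g z

def enB (n : ℕ) (f g : HS n) : ℝ :=
  (1 / (4 * π)) * ∑ x ∈ Lam (n + 4), edgeP (ext0 n f) (ext0 n g) x

lemma enB_self (n : ℕ) (f : HS n) : enB n f f = (1 / (4 * π)) * en n (ext0 n f) := by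
  unfold enB en
  congr 1
  apply Finset.sum_congr rfl
  intro x _
  simp [edgeP, gsq, pow_two]

def hsCore (n : ℕ) : InnerProductSpace.Core ℝ (HS n) where
  inner f g := enB n f g
  conj_inner_symm f g := by
    simp only [conj_trivial]
    unfold enB
    congr 1
    apply Finset.sum_congr rfl
    intro x _
    simp only [edgeP]; ring
  re_inner_nonneg f := by
    simp only [RCLike.re_to_real]
    rw [enB_self]
    have : 0 ≤ en n (ext0 n f) := Finset.sum_nonneg fun _ _ => gsq_nonneg _ _
    positivity
  add_left f g h := by
    simp only [enB, ← mul_add, ← Finset.sum_add_distrib]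
    congr 1
    apply Finset.sum_congr rfl
    intro x _
    simp only [edgeP, dH, dV, map_add, Pi.add_apply]; ring
  smul_left f g r := by
    simp only [enB, conj_trivial, Finset.mul_sum]
    apply Finset.sum_congr rfl
    intro x _
    simp only [edgeP, dH, dV, map_smul, Pi.smul_apply, smul_eq_mul]; ring
  definite f h := by
    rw [enB_self] at h
    have h0 : en n (ext0 n f) = 0 := by
      rcases mul_eq_zero.1 h with h | h
      · exfalso; revert h; positivity
      · exact h
    apply ext0_inj
    intro x
    have := pt_bound (ext0_out f) x
    rw [h0, mul_zero] at this
    have h2 : ext0 n f x = 0 := by nlinarith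
    rw [h2, map_zero]; rfl

instance (n : ℕ) : NormedAddCommGroup (HS n) := (hsCore n).toNormedAddCommGroup
instance (n : ℕ) : InnerProductSpace ℝ (HS n) := InnerProductSpace.ofCore (hsCore n).toCore
instance (n : ℕ) : MeasurableSpace (HS n) := borel (HS n)
instance (n : ℕ) : BorelSpace (HS n) := ⟨rfl⟩
instance (n : ℕ) : CompleteSpace (HS n) := FiniteDimensional.complete ℝ (HS n)

lemma hs_inner (n : ℕ) (f g : HS n) : inner ℝ f g = enB n f g := rfl

lemma hs_norm_sq (n : ℕ) (f : HS n) : ‖f‖ ^ 2 = (1 / (4 * π)) * en n (ext0 n f) := by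
  rw [← real_inner_self_eq_norm_sq, hs_inner, enB_self]

def evL (n : ℕ) (x : Site) : HS n →L[ℝ] ℝ :=
  LinearMap.toContinuousLinearMap ((LinearMap.proj x).comp (ext0 n))

lemma evL_apply (n : ℕ) (x : Site) (f : HS n) : evL n x f = ext0 n f x := rfl

def Gr (n : ℕ) (x : Site) : HS n := (InnerProductSpace.toDual ℝ (HS n)).symm (evL n x)

lemma inner_Gr (n : ℕ) (x : Site) (f : HS n) : inner ℝ (Gr n x) f = ext0 n f x := by
  rw [Gr, InnerProductSpace.toDual_symm_apply, evL_apply]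

def Ksub (n : ℕ) (K : Set Site) : Submodule ℝ (HS n) :=
  Submodule.span ℝ (Gr n '' K)

def uK (n : ℕ) (K : Set Site) (c : Site) : HS n := (Ksub n K).starProjection (Gr n c)

lemma uK_mem (n : ℕ) (K : Set Site) (c : Site) : uK n K c ∈ Ksub n K :=
  Submodule.starProjection_apply_mem _ _

lemma qK_inner (n : ℕ) (K : Set Site) (c : Site) (v : HS n) (hv : v ∈ Ksub n K) :
    inner ℝ (Gr n c - uK n K c) v = 0 :=
  Submodule.starProjection_inner_eq_zero _ _ hv

lemma inner_uK (n : ℕ) (K : Set Site) (c d : Site) :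
    inner ℝ (uK n K c) (uK n K d) = ext0 n (uK n K c) d := by
  have h := qK_inner n K d (uK n K c) (uK_mem n K c)
  rw [inner_sub_left, inner_Gr, sub_eq_zero] at h
  rw [h, real_inner_comm]

lemma inner_Ksub_zero (n : ℕ) (K : Set Site) (g : HS n) (hg : ∀ y ∈ K, ext0 n g y = 0)
    (v : HS n) (hv : v ∈ Ksub n K) : inner ℝ v g = 0 := by
  induction hv using Submodule.span_induction with
  | mem x hx => obtain ⟨y, hy, rfl⟩ := hx; rw [inner_Gr, hg y hy]
  | zero => simp
  | add x y _ _ hx hy => rw [inner_add_left, hx, hy, add_zero]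
  | smul a x _ hx => rw [inner_smul_left, hx, mul_zero]

lemma box_edge {a : ℤ} {c z e : Site} (he : e = ((1 : ℤ), (0 : ℤ)) ∨ e = ((0 : ℤ), (1 : ℤ)))
    (hpar : ∃ b, a = 2 * b) :
    (z ∈ boxAt a c ↔ z + e ∈ boxAt a c) ∨
    (z ∈ innerBdryAt a c ∧ z + e ∉ boxAt a c) ∨ (z + e ∈ innerBdryAt a c ∧ z ∉ boxAt a c) := by
  obtain ⟨b, rfl⟩ := hpar
  simp only [innerBdryAt, boxAt, Set.mem_ofPred_eq, Int.abs_eq_natAbs]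
  rcases he with rfl | rfl <;> simp only [Prod.fst_add, Prod.snd_add, add_zero] <;> omega

lemma inner_uK_test (n : ℕ) (K : Set Site) (c : Site) (a : ℤ) (hpar : ∃ b, a = 2 * b) (ha : 0 ≤ a)
    (hK : innerBdryAt a c ⊆ K) (F : HS n)
    (hF : ∀ z ∈ boxAt a c, ext0 n F z = ext0 n F c) :
    inner ℝ (uK n K c) F = ext0 n F c := by
  set q := Gr n c - uK n K c with hq
  have hqK : ∀ y ∈ K, ext0 n q y = 0 := by
    intro y hy
    rw [← inner_Gr, real_inner_comm]
    exact qK_inner n K c _ (Submodule.subset_span ⟨y, hy, rfl⟩)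
  have hqt : ∀ g : HS n, (∀ y ∈ K, ext0 n g y = 0) → inner ℝ q g = ext0 n g c := by
    intro g hg
    rw [hq, inner_sub_left, inner_Gr, inner_Ksub_zero n K g hg _ (uK_mem n K c), sub_zero]
  have hcB : c ∈ boxAt a c := by simp [boxAt, ha]
  set Q := ext0 n q with hQ
  set q1 : HS n := mkHS n (fun z => if z ∈ boxAt a c then 0 else Q z) with hq1
  have e1 : ext0 n q1 = fun z => if z ∈ boxAt a c then 0 else Q z := by
    apply ext0_mk
    intro x hx
    simp [hQ, ext0_out q x hx]
  -- `q` and `q1`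
  have hdiff : enB n q q1 = enB n q1 q1 := by
    unfold enB
    congr 1
    apply Finset.sum_congr rfl
    intro z _
    have key : ∀ e : Site, (e = ((1 : ℤ), (0 : ℤ)) ∨ e = ((0 : ℤ), (1 : ℤ))) →
        (Q z - Q (z + e)) * (ext0 n q1 z - ext0 n q1 (z + e)) =
        (ext0 n q1 z - ext0 n q1 (z + e)) * (ext0 n q1 z - ext0 n q1 (z + e)) := by
      intro e he
      rw [e1]
      rcases box_edge (z := z) (c := c) he hpar with h | ⟨h, h'⟩ | ⟨h, h'⟩
      · by_cases hz : z ∈ boxAt a c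
        · simp [hz, h.1 hz]
        · have hz2 : z + e ∉ boxAt a c := fun h2 => hz (h.2 h2)
          simp [hz, hz2]
      · simp [h', h.1, hqK _ (hK h)]
      · simp [h', h.1, hqK _ (hK h)]
    exact congrArg₂ (· + ·) (key _ (Or.inl rfl)) (key _ (Or.inr rfl))
  have hq10 : q1 = 0 := by
    have h1 : inner ℝ q q1 = ext0 n q1 c := by
      apply hqt
      intro y hy
      rw [e1]
      simp only [hqK y hy, ite_self]
    rw [hs_inner, hdiff, ← hs_inner, e1] at h1
    simp only [hcB, if_true] at h1
    exact inner_self_eq_zero.1 h1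
  have hout : ∀ z, z ∉ boxAt a c → Q z = 0 := by
    intro z hz
    have : ext0 n q1 z = 0 := by rw [hq10, map_zero]; rfl
    rw [e1] at this
    simpa [hz] using this
  have hqF : enB n q F = 0 := by
    unfold enB
    rw [Finset.sum_eq_zero, mul_zero]
    intro z _
    have key : ∀ e : Site, (e = ((1 : ℤ), (0 : ℤ)) ∨ e = ((0 : ℤ), (1 : ℤ))) →
        (Q z - Q (z + e)) * (ext0 n F z - ext0 n F (z + e)) = 0 := by
      intro e he
      rcases box_edge (z := z) (c := c) he hpar with h | ⟨h, h'⟩ | ⟨h, h'⟩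
      · by_cases hz : z ∈ boxAt a c
        · rw [hF z hz, hF _ (h.1 hz)]; ring
        · rw [hout z hz, hout _ (fun h2 => hz (h.2 h2))]; ring
      · rw [hout _ h', hqK _ (hK h)]; ring
      · rw [hout _ h', hqK _ (hK h)]; ring
    have := congrArg₂ (· + ·) (key _ (Or.inl rfl)) (key _ (Or.inr rfl))
    simpa [edgeP, dH, dV] using this
  have : inner ℝ q F = 0 := hqF
  rw [hq, inner_sub_left, inner_Gr, sub_eq_zero] at this
  exact this.symm

open ProbabilityTheory

/-! ### Part 4: Gaussian measures -/

section GaussA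
set_option linter.unusedSectionVars false
variable {E : Type*} [NormedAddCommGroup E] [InnerProductSpace ℝ E] [FiniteDimensional ℝ E]
  [MeasurableSpace E] [BorelSpace E]

def gdens (E : Type*) [NormedAddCommGroup E] (v : E) : ℝ≥0∞ := ENNReal.ofReal (Real.exp (-(‖v‖ ^ 2 / 2)))

lemma gdens_meas : Measurable (gdens E) := by
  unfold gdens; fun_prop

lemma std_of_vol :
    ((volume : Measure E).withDensity (gdens E) Set.univ)⁻¹ • (volume : Measure E).withDensity (gdens E)
      = stdGaussian E := by
  set μ0 := (volume : Measure E).withDensity (gdens E) with hμ0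
  set Z := μ0 Set.univ with hZ
  have hint : Integrable (fun v : E => Real.exp (-(‖v‖ ^ 2 / 2))) := by
    have h := (GaussianFourier.integrable_cexp_neg_mul_sq_norm_add (V := E) (b := (1/2 : ℂ))
      (by norm_num) 0 (0 : E)).re
    refine h.congr (Eventually.of_forall fun v => ?_)
    simp only [zero_mul, add_zero]
    have : (-(1/2 : ℂ) * (‖v‖ : ℂ) ^ 2) = ((-(‖v‖ ^ 2 / 2) : ℝ) : ℂ) := by push_cast; ring
    rw [this, ← Complex.ofReal_exp]
    exact Complex.ofReal_re _
  have hZtop : Z ≠ ∞ := by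
    rw [hZ, hμ0, withDensity_apply _ MeasurableSet.univ, Measure.restrict_univ]
    have := hint.lintegral_lt_top
    exact this.ne
  have hZ0 : Z ≠ 0 := by
    rw [hZ, Ne, Measure.measure_univ_eq_zero, hμ0, withDensity_eq_zero_iff gdens_meas.aemeasurable]
    intro h
    have : ∀ᵐ x : E, False := h.mono fun x hx => by
      simp only [gdens, Pi.zero_apply, ENNReal.ofReal_eq_zero] at hx
      exact absurd hx (not_le.2 (Real.exp_pos _))
    rw [eventually_false_iff_eq_bot, ae_eq_bot] at this
    exact (NeZero.ne (volume : Measure E)) this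
  have hfin : IsFiniteMeasure (Z⁻¹ • μ0) := by
    refine ⟨?_⟩
    rw [Measure.smul_apply, smul_eq_mul, ← hZ, ENNReal.inv_mul_cancel hZ0 hZtop]; simp
  have hprob : IsProbabilityMeasure (Z⁻¹ • μ0) := by
    refine ⟨?_⟩
    rw [Measure.smul_apply, smul_eq_mul, ← hZ, ENNReal.inv_mul_cancel hZ0 hZtop]
  have hform : ∀ t : E, charFun (Z⁻¹ • μ0) t =
      ((Z⁻¹).toReal * ((π : ℂ) / (1/2 : ℂ)) ^ ((Module.finrank ℝ E : ℂ) / 2)) *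
        Complex.exp (- ‖t‖ ^ 2 / 2) := by
    intro t
    rw [charFun_apply, integral_smul_measure, hμ0,
      integral_withDensity_eq_integral_toReal_smul gdens_meas (Eventually.of_forall fun x => by simp [gdens])]
    have h := GaussianFourier.integral_cexp_neg_mul_sq_norm_add (V := E) (b := (1/2 : ℂ))
      (by norm_num) Complex.I t
    rw [Complex.real_smul, mul_assoc]
    congr 1
    have e2 : Complex.exp (-(‖t‖:ℂ) ^ 2 / 2) = Complex.exp (Complex.I ^ 2 * (‖t‖:ℂ) ^ 2 / (4 * (1/2))) := by
      congr 1; rw [Complex.I_sq]; ring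
    rw [e2, ← h]
    apply integral_congr_ae
    refine Eventually.of_forall fun v => ?_
    simp only [gdens]
    rw [ENNReal.toReal_ofReal (Real.exp_pos _).le, Complex.real_smul, Complex.ofReal_exp, ← Complex.exp_add]
    congr 1
    push_cast
    rw [real_inner_comm]
    ring
  have hA : ((Z⁻¹).toReal * ((π : ℂ) / (1/2 : ℂ)) ^ ((Module.finrank ℝ E : ℂ) / 2)) = 1 := by
    have h0 := hform 0
    rw [charFun_zero] at h0
    simpa using h0.symm
  apply Measure.ext_of_charFun
  funext t
  rw [hform t, hA, one_mul, charFun_stdGaussian]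

lemma std_of_haar (ν : Measure E) [ν.IsAddHaarMeasure] :
    (ν.withDensity (gdens E) Set.univ)⁻¹ • ν.withDensity (gdens E) = stdGaussian E := by
  have hc' := Measure.isAddLeftInvariant_eq_smul ν (volume : Measure E)
  have hpos := Measure.addHaarScalarFactor_pos_of_isAddHaarMeasure ν (volume : Measure E)
  obtain ⟨c, hc0, hct, hc⟩ : ∃ c : ℝ≥0∞, c ≠ 0 ∧ c ≠ ∞ ∧ ν = c • (volume : Measure E) :=
    ⟨(Measure.addHaarScalarFactor ν (volume : Measure E) : ℝ≥0∞), by simpa using hpos.ne', by simp, hc'⟩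
  rw [← std_of_vol, hc, withDensity_smul_measure, Measure.smul_apply, smul_smul, smul_eq_mul]
  congr 1
  rw [ENNReal.mul_inv (Or.inl hc0) (Or.inl hct), mul_comm, ← mul_assoc, ENNReal.mul_inv_cancel hc0 hct,
    one_mul]

end GaussA

open ProbabilityTheory
section GaussB
set_option linter.unusedSectionVars false
variable {E : Type*} [NormedAddCommGroup E] [InnerProductSpace ℝ E] [FiniteDimensional ℝ E]
  [MeasurableSpace E] [BorelSpace E]
variable {F : Type*} [NormedAddCommGroup F] [InnerProductSpace ℝ F] [FiniteDimensional ℝ F]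
  [MeasurableSpace F] [BorelSpace F]
variable {G : Type*} [NormedAddCommGroup G] [InnerProductSpace ℝ G] [FiniteDimensional ℝ G]
  [MeasurableSpace G] [BorelSpace G]

lemma map_lin_std (L : E →L[ℝ] F) (A : F → E) (h1 : ∀ x g, inner ℝ (L g) x = inner ℝ g (A x))
    (hn : ∀ x, ‖A x‖ = ‖x‖) : (stdGaussian E).map L = stdGaussian F := by
  have : IsFiniteMeasure ((stdGaussian E).map L) := inferInstance
  apply Measure.ext_of_charFun
  funext t
  rw [charFun_apply, integral_map L.continuous.measurable.aemeasurable
    (by apply Measurable.aestronglyMeasurable; fun_prop), charFun_stdGaussian, ← hn, ← charFun_stdGaussian,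
    charFun_apply]
  simp only [h1]

lemma indep_lin (L1 : E →L[ℝ] F) (L2 : E →L[ℝ] G) (A1 : F → E) (A2 : G → E)
    (h1 : ∀ x g, inner ℝ (L1 g) x = inner ℝ g (A1 x))
    (h2 : ∀ x g, inner ℝ (L2 g) x = inner ℝ g (A2 x))
    (h : ∀ x y, inner ℝ (A1 x) (A2 y) = 0) : IndepFun L1 L2 (stdGaussian E) := by
  have hg : HasGaussianLaw (fun ω => (L1 ω, L2 ω)) (stdGaussian E) :=
    (IsGaussian.hasGaussianLaw_id (μ := stdGaussian E)).map (L1.prod L2)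
  apply hg.indepFun_of_covariance_inner
  intro x y
  have e1 : (fun ω => inner ℝ x (L1 ω)) = fun ω => inner ℝ (A1 x) ω := by
    funext ω; rw [real_inner_comm, h1, real_inner_comm]
  have e2 : (fun ω => inner ℝ y (L2 ω)) = fun ω => inner ℝ (A2 y) ω := by
    funext ω; rw [real_inner_comm, h2, real_inner_comm]
  rw [e1, e2, ← covarianceBilin_apply_eq_cov IsGaussian.memLp_two_id, covarianceBilin_stdGaussian]
  exact h x y

end GaussB

/-! ### The vector-valued Hilbert space -/

abbrev HSN (n N : ℕ) : Type := PiLp 2 (fun _ : Fin N => HS n)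

def XL {n : ℕ} (N : ℕ) (f : HS n) : HSN n N →L[ℝ] Spin N :=
  LinearMap.toContinuousLinearMap
    { toFun := fun g => WithLp.toLp 2 (fun i => inner ℝ f (g i))
      map_add' := fun g h => by ext i; simp [inner_add_right]
      map_smul' := fun c g => by ext i; simp [inner_smul_right] }

lemma XL_apply {n N : ℕ} (f : HS n) (g : HSN n N) (i : Fin N) : XL N f g i = inner ℝ f (g i) := rfl

def XA {n N : ℕ} (f : HS n) (s : Spin N) : HSN n N := WithLp.toLp 2 (fun i => s i • f)

lemma XL_adj {n N : ℕ} (f : HS n) (s : Spin N) (g : HSN n N) :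
    inner ℝ (XL N f g) s = inner ℝ g (XA f s) := by
  rw [PiLp.inner_apply, PiLp.inner_apply]
  apply Finset.sum_congr rfl
  intro i _
  simp only [XL_apply, XA, inner_smul_right, RCLike.inner_apply, conj_trivial]
  rw [real_inner_comm]

lemma XL_add {n N : ℕ} (f g : HS n) (h : HSN n N) : XL N (f + g) h = XL N f h + XL N g h := by
  ext i; simp [XL_apply, inner_add_left]

lemma XL_smul {n N : ℕ} (c : ℝ) (f : HS n) (h : HSN n N) : XL N (c • f) h = c • XL N f h := by
  ext i; simp [XL_apply, inner_smul_left]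

lemma XL_std {n : ℕ} (N : ℕ) (f : HS n) (hf : ‖f‖ = 1) :
    (stdGaussian (HSN n N)).map (XL N f) = stdGaussian (Spin N) := by
  apply map_lin_std _ _ (XL_adj f)
  intro s
  rw [PiLp.norm_eq_of_L2, PiLp.norm_eq_of_L2]
  congr 1
  apply Finset.sum_congr rfl
  intro i _
  simp [XA, norm_smul, hf]

lemma XL_indep {n : ℕ} (N : ℕ) (f g : HS n) (hfg : inner ℝ f g = 0) :
    IndepFun (XL N f) (XL N g) (stdGaussian (HSN n N)) := by
  apply indep_lin _ _ _ _ (XL_adj f) (XL_adj g)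
  intro x y
  rw [PiLp.inner_apply]
  apply Finset.sum_eq_zero
  intro i _
  simp [XA, inner_smul_left, inner_smul_right, hfg]

def PL (n N : ℕ) (K : Set Site) : HSN n N →L[ℝ] HSN n N :=
  LinearMap.toContinuousLinearMap
    { toFun := fun g => WithLp.toLp 2 (fun i => (Ksub n K).starProjection (g i))
      map_add' := fun g h => by ext i; simp
      map_smul' := fun c g => by ext i; simp }

lemma PL_apply {n N : ℕ} (K : Set Site) (g : HSN n N) (i : Fin N) :
    PL n N K g i = (Ksub n K).starProjection (g i) := rfl

lemma PL_adj {n N : ℕ} (K : Set Site) (s : HSN n N) (g : HSN n N) :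
    inner ℝ (PL n N K g) s = inner ℝ g (PL n N K s) := by
  rw [PiLp.inner_apply, PiLp.inner_apply]
  apply Finset.sum_congr rfl
  intro i _
  rw [PL_apply, PL_apply]
  exact Submodule.inner_starProjection_left_eq_right _ _ _

lemma q_indep (n N : ℕ) (K : Set Site) (c : Site) :
    IndepFun (XL N (Gr n c - uK n K c)) (PL n N K) (stdGaussian (HSN n N)) := by
  apply indep_lin _ _ _ _ (XL_adj _) (PL_adj K)
  intro x y
  rw [PiLp.inner_apply]
  apply Finset.sum_eq_zero
  intro i _
  rw [PL_apply]
  simp only [XA, inner_smul_left]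
  rw [qK_inner n K c _ (Submodule.starProjection_apply_mem _ _), mul_zero]

lemma XL_PL {n N : ℕ} (K : Set Site) (y : Site) (hy : y ∈ K) (g : HSN n N) :
    XL N (Gr n y) (PL n N K g) = XL N (Gr n y) g := by
  ext i
  rw [XL_apply, XL_apply, PL_apply, ← Submodule.inner_starProjection_left_eq_right]
  congr 1
  rw [Submodule.starProjection_eq_self_iff]
  exact Submodule.subset_span ⟨y, hy, rfl⟩

open ProbabilityTheory

def TL (n N : ℕ) : ({x // x ∈ Lam n} → Spin N) ≃ₗ[ℝ] HSN n N where
  toFun ω := WithLp.toLp 2 (fun i => ((fun x => ω x i) : HS n))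
  invFun g := fun x => WithLp.toLp 2 (fun i => (g i : {x // x ∈ Lam n} → ℝ) x)
  map_add' ω η := by ext i; rfl
  map_smul' c ω := by ext i; rfl
  left_inv ω := by funext x; ext i; rfl
  right_inv g := by ext i; rfl

def TC (n N : ℕ) : ({x // x ∈ Lam n} → Spin N) ≃L[ℝ] HSN n N := (TL n N).toContinuousLinearEquiv

lemma TC_apply (n N : ℕ) (ω : {x // x ∈ Lam n} → Spin N) (i : Fin N) :
    TC n N ω i = ((fun x => ω x i) : HS n) := rfl

def toConf (n N : ℕ) (g : HSN n N) : Conf N := fun x => XL N (Gr n x) g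

lemma toConf_apply (n N : ℕ) (g : HSN n N) (x : Site) (i : Fin N) :
    toConf n N g x i = ext0 n (g i) x := by
  rw [toConf, XL_apply, inner_Gr]

lemma toConf_meas (n N : ℕ) : Measurable (toConf n N) :=
  measurable_pi_lambda _ fun x => (XL N (Gr n x)).continuous.measurable

lemma toConf_TC (n N : ℕ) (ω : {x // x ∈ Lam n} → Spin N) : toConf n N (TC n N ω) = extZero n ω := by
  funext x
  ext i
  rw [toConf_apply, TC_apply]
  by_cases h : x ∈ Lam n
  · simp [ext0, extZero, h]
  · simp [ext0, extZero, h]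

lemma dirEnergy_TC (n N : ℕ) (ω : {x // x ∈ Lam n} → Spin N) :
    dirEnergy n N (extZero n ω) = ‖TC n N ω‖ ^ 2 / 2 := by
  rw [PiLp.norm_sq_eq_of_L2, ← toConf_TC]
  simp only [hs_norm_sq]
  rw [← Finset.mul_sum]
  unfold dirEnergy en
  rw [Finset.sum_comm]
  have : ∀ x ∈ Lam (n+4), (‖toConf n N (TC n N ω) x - toConf n N (TC n N ω) (x + ((1 : ℤ), (0 : ℤ)))‖ ^ 2 +
      ‖toConf n N (TC n N ω) x - toConf n N (TC n N ω) (x + ((0 : ℤ), (1 : ℤ)))‖ ^ 2) =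
      ∑ i, gsq (ext0 n (TC n N ω i)) x := by
    intro x _
    rw [EuclideanSpace.norm_sq_eq, EuclideanSpace.norm_sq_eq, ← Finset.sum_add_distrib]
    apply Finset.sum_congr rfl
    intro i _
    simp only [PiLp.sub_apply, toConf_apply, Real.norm_eq_abs, sq_abs, gsq, dH, dV]
  rw [Finset.sum_congr rfl this]
  field_simp
  ring

lemma gffAux_map (n N : ℕ) : (gffAux n N).map (TC n N) =
    ((Measure.pi fun _ : {x // x ∈ Lam n} => (volume : Measure (Spin N))).map (TC n N)).withDensity
      (gdens (HSN n N)) := by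
  have hT : Measurable (TC n N) := (TC n N).continuous.measurable
  ext s hs
  rw [Measure.map_apply hT hs, gffAux, withDensity_apply _ (hT hs), withDensity_apply _ hs,
    setLIntegral_map hs gdens_meas hT]
  simp only [gdens, dirEnergy_TC]

lemma gff_eq (n N : ℕ) : gff n N = (stdGaussian (HSN n N)).map (toConf n N) := by
  have hT : Measurable (TC n N) := (TC n N).continuous.measurable
  have h1 : gffAux n N Set.univ = (gffAux n N).map (TC n N) Set.univ := by
    rw [Measure.map_apply hT MeasurableSet.univ, Set.preimage_univ]
  have h2 : (extZero n : ({x // x ∈ Lam n} → Spin N) → Conf N) = toConf n N ∘ TC n N := by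
    funext ω; exact (toConf_TC n N ω).symm
  have hh : ((Measure.pi fun _ : {x // x ∈ Lam n} => (volume : Measure (Spin N))).map
      (TC n N)).IsAddHaarMeasure :=
    ContinuousLinearEquiv.isAddHaarMeasure_map (TC n N)
      (Measure.pi fun _ : {x // x ∈ Lam n} => (volume : Measure (Spin N)))
  rw [gff, h1, h2, ← Measure.map_map (toConf_meas n N) hT, gffAux_map, ← Measure.map_smul,
    std_of_haar]

instance gff_prob (n N : ℕ) : IsProbabilityMeasure (gff n N) := by
  rw [gff_eq]
  exact Measure.isProbabilityMeasure_map (toConf_meas n N).aemeasurable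

open ProbabilityTheory

lemma mGrid_le (N : ℕ) (K : Set Site) : mGrid N K ≤ (inferInstance : MeasurableSpace (Conf N)) := by
  have : Measurable (fun (φ : Conf N) (y : K) => φ y) := by fun_prop
  exact this.comap_le

lemma exists_h (n N : ℕ) (K : Set Site) (v : HS n) (hv : v ∈ Ksub n K) :
    ∃ h : Conf N → Spin N, StronglyMeasurable[mGrid N K] h ∧ ∀ g, h (toConf n N g) = XL N v g := by
  induction hv using Submodule.span_induction with
  | mem x hx =>
    obtain ⟨y, hy, rfl⟩ := hx
    refine ⟨fun φ => φ y, ?_, fun g => rfl⟩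
    have h1 : Measurable[mGrid N K] (fun (φ : Conf N) (y : K) => φ y) := comap_measurable _
    have h2 : Measurable (fun ψ : K → Spin N => ψ ⟨y, hy⟩) := measurable_pi_apply _
    exact (h2.comp h1).stronglyMeasurable
  | zero =>
    refine ⟨fun _ => 0, stronglyMeasurable_const, fun g => ?_⟩
    ext i; simp [XL_apply]
  | add x y _ _ hx hy =>
    obtain ⟨h1, m1, e1⟩ := hx
    obtain ⟨h2, m2, e2⟩ := hy
    refine ⟨h1 + h2, m1.add m2, fun g => ?_⟩
    rw [Pi.add_apply, e1, e2, XL_add]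
  | smul a x _ hx =>
    obtain ⟨h1, m1, e1⟩ := hx
    refine ⟨a • h1, m1.const_smul a, fun g => ?_⟩
    rw [Pi.smul_apply, e1, XL_smul]

lemma XL_integrable {n : ℕ} (N : ℕ) (f : HS n) : Integrable (XL N f) (stdGaussian (HSN n N)) :=
  (XL N f).integrable_comp (φ := fun x => x) IsGaussian.integrable_id

lemma harmExt_ae (n N : ℕ) (K : Set Site) (c : Site) :
    ∀ᵐ g ∂(stdGaussian (HSN n N)), harmExt n N K c (toConf n N g) = XL N (uK n K c) g := by
  obtain ⟨h, hm, he⟩ := exists_h n N K (uK n K c) (uK_mem n K c)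
  have hm0 : StronglyMeasurable h := hm.mono (mGrid_le N K)
  have hT := toConf_meas n N
  have hfm : Measurable (fun ψ : Conf N => ψ c) := measurable_pi_apply c
  have hsub : ∀ g, ((fun ψ : Conf N => ψ c) - h) (toConf n N g) = XL N (Gr n c - uK n K c) g := by
    intro g
    rw [Pi.sub_apply, he]
    ext i
    simp only [PiLp.sub_apply, XL_apply, inner_sub_left]
    rfl
  have ih : Integrable h (gff n N) := by
    rw [gff_eq, integrable_map_measure hm0.aestronglyMeasurable hT.aemeasurable]
    refine (XL_integrable N (uK n K c)).congr (Eventually.of_forall fun g => (he g).symm)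
  have ifh : Integrable ((fun ψ : Conf N => ψ c) - h) (gff n N) := by
    rw [gff_eq, integrable_map_measure (hfm.stronglyMeasurable.sub hm0).aestronglyMeasurable hT.aemeasurable]
    refine (XL_integrable N _).congr (Eventually.of_forall fun g => (hsub g).symm)
  have hmean : ∫ φ, ((fun ψ : Conf N => ψ c) - h) φ ∂(gff n N) = 0 := by
    rw [gff_eq, integral_map hT.aemeasurable (hfm.stronglyMeasurable.sub hm0).aestronglyMeasurable]
    simp only [hsub]
    rw [ContinuousLinearMap.integral_comp_comm (φ := fun x => x) _ IsGaussian.integrable_id,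
      integral_id_stdGaussian, map_zero]
  have hind : IndepFun ((fun ψ : Conf N => ψ c) - h) (fun (φ : Conf N) (y : K) => φ y) (gff n N) := by
    rw [indepFun_iff_measure_inter_preimage_eq_mul]
    intro s t hs ht
    have hm1 : Measurable ((fun ψ : Conf N => ψ c) - h) := hfm.sub hm0.measurable
    have hm2 : Measurable (fun (φ : Conf N) (y : K) => φ y) := by fun_prop
    rw [gff_eq, Measure.map_apply hT ((hm1 hs).inter (hm2 ht)), Measure.map_apply hT (hm1 hs),
      Measure.map_apply hT (hm2 ht)]
    have hq := q_indep n N K c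
    have hq2 := hq.comp (φ := id) (ψ := fun g (y : K) => XL N (Gr n y) g) measurable_id
      (measurable_pi_lambda _ fun y => (XL N (Gr n y)).continuous.measurable)
    rw [indepFun_iff_measure_inter_preimage_eq_mul] at hq2
    have h3 := hq2 s t hs ht
    have e1 : (id ∘ XL N (Gr n c - uK n K c)) = ((fun ψ : Conf N => ψ c) - h) ∘ toConf n N := by
      funext g; exact (hsub g).symm
    have e2 : ((fun g (y : K) => XL N (Gr n y) g) ∘ PL n N K) =
        (fun (φ : Conf N) (y : K) => φ y) ∘ toConf n N := by
      funext g y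
      exact XL_PL K y y.2 g
    rw [e1, e2] at h3
    exact h3
  have hc1 : (gff n N)[((fun ψ : Conf N => ψ c) - h) | mGrid N K] =ᵐ[gff n N] fun _ => 0 := by
    have hm1 : Measurable ((fun ψ : Conf N => ψ c) - h) := hfm.sub hm0.measurable
    have := condExp_indep_eq (μ := gff n N) (m₁ := MeasurableSpace.comap ((fun ψ : Conf N => ψ c) - h) inferInstance)
      (m₂ := mGrid N K) (f := (fun ψ : Conf N => ψ c) - h) hm1.comap_le (mGrid_le N K)
      (comap_measurable _).stronglyMeasurable hind
    rw [hmean] at this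
    exact this
  have hc2 : (gff n N)[h | mGrid N K] = h := condExp_of_stronglyMeasurable (mGrid_le N K) hm ih
  have hfin : harmExt n N K c =ᵐ[gff n N] h := by
    have h4 := condExp_add (m := mGrid N K) ifh ih
    rw [sub_add_cancel, hc2] at h4
    unfold harmExt
    refine h4.trans ?_
    filter_upwards [hc1] with φ hφ
    rw [Pi.add_apply, hφ, zero_add]
  rw [gff_eq] at hfin
  have := ae_of_ae_map hT.aemeasurable hfin
  filter_upwards [this] with g hg
  rw [hg, he]

open ProbabilityTheory

def posO (N : ℕ) : Set (Spin N) := {s | ∀ i, 0 < s i}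

lemma posO_open (N : ℕ) : IsOpen (posO N) := by
  have : posO N = ⋂ i, {s : Spin N | 0 < s i} := by ext s; simp [posO]
  rw [this]
  exact isOpen_iInter_of_finite fun i => isOpen_lt continuous_const (by fun_prop)

lemma posO_convex (N : ℕ) : Convex ℝ (posO N) := by
  intro x hx y hy a b ha hb hab i
  have h1 := hx i
  have h2 := hy i
  simp only [PiLp.add_apply, PiLp.smul_apply, smul_eq_mul]
  rcases ha.eq_or_lt with h | h
  · have : b = 1 := by linarith
    subst this; subst h; linarith
  · have := mul_pos h h1
    have := mul_nonneg hb h2.le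
    linarith

lemma posO_smul {N : ℕ} {c : ℝ} (hc : 0 < c) (s : Spin N) : c • s ∈ posO N ↔ s ∈ posO N := by
  constructor <;> intro h i
  · have := h i
    simp only [PiLp.smul_apply, smul_eq_mul] at this
    exact pos_of_mul_pos_right this hc.le
  · simp only [PiLp.smul_apply, smul_eq_mul]
    exact mul_pos hc (h i)

lemma std_ac (N : ℕ) : stdGaussian (Spin N) ≪ volume := by
  rw [← std_of_vol]
  exact (withDensity_absolutelyContinuous _ _).smul_left _

def pp (N : ℕ) : ℝ := (stdGaussian (Spin N)).real (posO N)

lemma pp_pos (N : ℕ) : 0 < pp N := by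
  unfold pp
  rw [measureReal_def, ENNReal.toReal_pos_iff]
  refine ⟨?_, measure_lt_top _ _⟩
  rw [pos_iff_ne_zero]
  intro h
  have hfin : (volume : Measure (Spin N)).withDensity (gdens (Spin N)) Set.univ ≠ ∞ := by
    intro h'
    have h2 := std_of_vol (E := Spin N)
    rw [h', ENNReal.inv_top, zero_smul] at h2
    have := (inferInstance : IsProbabilityMeasure (stdGaussian (Spin N))).measure_univ
    rw [← h2] at this
    simp at this
  rw [← std_of_vol, Measure.smul_apply, smul_eq_mul, mul_eq_zero] at h
  rcases h with h | h
  · exact hfin (ENNReal.inv_eq_zero.1 h)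
  · have h3 := withDensity_absolutelyContinuous' (μ := (volume : Measure (Spin N)))
      gdens_meas.aemeasurable (Eventually.of_forall fun x => by simp [gdens, Real.exp_pos]) h
    have hne : (posO N).Nonempty := ⟨WithLp.toLp 2 (fun _ => 1), fun i => by simp⟩
    exact ((posO_open N).measure_pos volume hne).ne' h3

lemma tendsto_pair (N : ℕ) : Tendsto (fun ρ : ℝ => ((stdGaussian (Spin N)).prod (stdGaussian (Spin N)))
    {z | z.1 ∈ posO N ∧ ρ • z.1 + √(1 - ρ ^ 2) • z.2 ∈ posO N}) (nhds 0)
    (nhds (((stdGaussian (Spin N)).prod (stdGaussian (Spin N))) (posO N ×ˢ posO N))) := by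
  apply tendsto_measure_of_ae_tendsto_indicator_of_isFiniteMeasure
  · exact (posO_open N).measurableSet.prod (posO_open N).measurableSet
  · intro ρ
    have h2 : Measurable (fun z : Spin N × Spin N => ρ • z.1 + √(1 - ρ ^ 2) • z.2) := by fun_prop
    exact (measurable_fst (posO_open N).measurableSet).inter (h2 (posO_open N).measurableSet)
  · have h0 : ∀ᵐ y ∂(stdGaussian (Spin N)), y ∉ frontier (posO N) := by
      have := std_ac N ((posO_convex N).addHaar_frontier volume)
      exact measure_eq_zero_iff_ae_notMem.1 this
    have h1 : ∀ᵐ z ∂((stdGaussian (Spin N)).prod (stdGaussian (Spin N))), z.2 ∉ frontier (posO N) :=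
      Measure.quasiMeasurePreserving_snd.ae h0
    filter_upwards [h1] with z hz
    have hcont : Tendsto (fun ρ : ℝ => ρ • z.1 + √(1 - ρ ^ 2) • z.2) (nhds 0) (nhds z.2) := by
      have : Continuous (fun ρ : ℝ => ρ • z.1 + √(1 - ρ ^ 2) • z.2) := by fun_prop
      have := this.tendsto 0
      simpa using this
    by_cases h : z.2 ∈ closure (posO N)
    · have hin : z.2 ∈ posO N := by
        by_contra hn
        apply hz
        rw [(posO_open N).frontier_eq]
        exact ⟨h, hn⟩
      filter_upwards [hcont ((posO_open N).mem_nhds hin)] with ρ hρ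
      have : ρ • z.1 + √(1 - ρ ^ 2) • z.2 ∈ posO N := hρ
      simp [this, hin]
    · have hn : z.2 ∉ posO N := fun h' => h (subset_closure h')
      filter_upwards [hcont (isClosed_closure.isOpen_compl.mem_nhds h)] with ρ hρ
      have : ρ • z.1 + √(1 - ρ ^ 2) • z.2 ∉ posO N := fun h' => hρ (subset_closure h')
      simp [this, hn]

lemma pair_joint {n : ℕ} (N : ℕ) (f g : HS n) (hf : ‖f‖ = 1) (hg : ‖g‖ = 1) (hρ : |inner ℝ f g| < 1) :
    stdGaussian (HSN n N) {ω | XL N f ω ∈ posO N ∧ XL N g ω ∈ posO N} =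
    ((stdGaussian (Spin N)).prod (stdGaussian (Spin N)))
    {z | z.1 ∈ posO N ∧ (inner ℝ f g : ℝ) • z.1 + √(1 - (inner ℝ f g : ℝ) ^ 2) • z.2 ∈ posO N} := by
  set ρ : ℝ := inner ℝ f g with hρd
  have hpos : 0 < 1 - ρ ^ 2 := by
    have := (sq_lt_one_iff_abs_lt_one ρ).2 hρ
    linarith
  set σ := √(1 - ρ ^ 2) with hσ
  have hσp : 0 < σ := Real.sqrt_pos.2 hpos
  have hσ2 : σ ^ 2 = 1 - ρ ^ 2 := Real.sq_sqrt hpos.le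
  set w : HS n := σ⁻¹ • (g - ρ • f) with hw
  have hff : inner ℝ f f = (1 : ℝ) := by rw [real_inner_self_eq_norm_sq, hf]; norm_num
  have hgg : inner ℝ g g = (1 : ℝ) := by rw [real_inner_self_eq_norm_sq, hg]; norm_num
  have hfw : inner ℝ f w = 0 := by
    rw [hw, inner_smul_right, inner_sub_right, inner_smul_right, hff, ← hρd]; ring
  have hww : ‖w‖ = 1 := by
    have : ‖w‖ ^ 2 = 1 := by
      rw [← real_inner_self_eq_norm_sq, hw, inner_smul_right, inner_smul_left, inner_sub_right,
        inner_sub_left, inner_sub_left, inner_smul_right, inner_smul_right, inner_smul_left, inner_smul_left,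
        hff, hgg, real_inner_comm f g, ← hρd]
      simp only [conj_trivial]
      field_simp
      rw [hσ2]; ring
    nlinarith [norm_nonneg w]
  have hgw : g = ρ • f + σ • w := by
    rw [hw, smul_smul, mul_inv_cancel₀ hσp.ne', one_smul]; abel
  have hlaw := (indepFun_iff_map_prod_eq_prod_map_map (XL N f).continuous.measurable.aemeasurable
    (XL N w).continuous.measurable.aemeasurable).1 (XL_indep N f w hfw)
  rw [XL_std N f hf, XL_std N w hww] at hlaw
  rw [← hlaw, Measure.map_apply]
  · congr 1
    ext ω
    have : XL N g ω = ρ • XL N f ω + σ • XL N w ω := by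
      conv_lhs => rw [hgw]
      rw [XL_add, XL_smul, XL_smul]
    simp [this]
  · exact (XL N f).continuous.measurable.prodMk (XL N w).continuous.measurable
  · have h2 : Measurable (fun z : Spin N × Spin N => ρ • z.1 + σ • z.2) := by fun_prop
    exact (measurable_fst (posO_open N).measurableSet).inter (h2 (posO_open N).measurableSet)

lemma pair_bound (N : ℕ) (η : ℝ) (hη : 0 < η) : ∃ δ : ℝ, 0 < δ ∧ ∀ (n : ℕ) (f g : HS n), ‖f‖ = 1 → ‖g‖ = 1 →
    |inner ℝ f g| < δ →
    (stdGaussian (HSN n N)).real {ω | XL N f ω ∈ posO N ∧ XL N g ω ∈ posO N} ≤ pp N ^ 2 + η := by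
  have h := (ENNReal.tendsto_toReal (measure_ne_top _ _)).comp (tendsto_pair N)
  have h0 : (((stdGaussian (Spin N)).prod (stdGaussian (Spin N))) (posO N ×ˢ posO N)).toReal = pp N ^ 2 := by
    rw [Measure.prod_prod, ENNReal.toReal_mul, pow_two]; rfl
  rw [h0] at h
  obtain ⟨δ, hδ, hh⟩ := Metric.eventually_nhds_iff.1 (h.eventually (gt_mem_nhds (lt_add_of_pos_right _ hη)))
  refine ⟨min δ 1, lt_min hδ one_pos, fun n f g hf hg hfg => ?_⟩
  rw [measureReal_def, pair_joint N f g hf hg (hfg.trans_le (min_le_right _ _))]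
  refine (hh ?_).le
  rw [Real.dist_eq, sub_zero]
  exact hfg.trans_le (min_le_left _ _)

lemma second_moment {Ω ι : Type*} [MeasurableSpace Ω] (μ : Measure Ω) [IsProbabilityMeasure μ]
    (S : Finset ι) (A : ι → Set Ω) (hA : ∀ i, MeasurableSet (A i)) (p V : ℝ) (hp0 : 0 < p)
    (hp : ∀ i ∈ S, μ.real (A i) = p)
    (hV : ∑ i ∈ S, ∑ j ∈ S, μ.real (A i ∩ A j) ≤ p ^ 2 * (S.card : ℝ) ^ 2 + V) :
    (p * S.card / 2) ^ 2 * μ.real {ω | ((S.filter (fun i => ω ∈ A i)).card : ℝ) ≤ p * S.card / 2} ≤ V := by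
  set M : ℝ := (S.card : ℝ) with hM
  set X : Ω → ℝ := fun ω => ∑ i ∈ S, (A i).indicator (fun _ => (1 : ℝ)) ω with hX
  have hXc : ∀ ω, X ω = ((S.filter (fun i => ω ∈ A i)).card : ℝ) := by
    intro ω
    simp only [hX, Set.indicator_apply, Finset.sum_ite, Finset.sum_const_zero, add_zero, Finset.sum_const,
      nsmul_eq_mul, mul_one]
  have hind : ∀ s : Set Ω, MeasurableSet s → Integrable (s.indicator (fun _ => (1 : ℝ))) μ :=
    fun s hs => (integrable_const 1).indicator hs
  have hXi : Integrable X μ := integrable_finsetSum _ fun i _ => hind _ (hA i)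
  have hX2 : ∀ ω, X ω ^ 2 = ∑ i ∈ S, ∑ j ∈ S, (A i ∩ A j).indicator (fun _ => (1 : ℝ)) ω := by
    intro ω
    rw [pow_two, hX, Finset.sum_mul_sum]
    refine Finset.sum_congr rfl fun i _ => Finset.sum_congr rfl fun j _ => ?_
    by_cases h1 : ω ∈ A i <;> by_cases h2 : ω ∈ A j <;> simp [Set.indicator, h1, h2]
  have hX2i : Integrable (fun ω => X ω ^ 2) μ := by
    simp only [hX2]
    exact integrable_finsetSum _ fun i _ => integrable_finsetSum _ fun j _ => hind _ ((hA i).inter (hA j))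
  have hI1 : ∫ ω, X ω ∂μ = p * M := by
    rw [hX, integral_finsetSum _ fun i _ => hind _ (hA i)]
    have : ∀ i ∈ S, ∫ ω, (A i).indicator (fun _ => (1 : ℝ)) ω ∂μ = p := by
      intro i hi
      rw [integral_indicator_const _ (hA i), hp i hi]; simp
    rw [Finset.sum_congr rfl this]; simp [hM, mul_comm]
  have hI2 : ∫ ω, X ω ^ 2 ∂μ = ∑ i ∈ S, ∑ j ∈ S, μ.real (A i ∩ A j) := by
    simp only [hX2]
    rw [integral_finsetSum _ fun i _ => integrable_finsetSum _ fun j _ => hind _ ((hA i).inter (hA j))]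
    refine Finset.sum_congr rfl fun i _ => ?_
    rw [integral_finsetSum _ fun j _ => hind _ ((hA i).inter (hA j))]
    refine Finset.sum_congr rfl fun j _ => ?_
    rw [integral_indicator_const _ ((hA i).inter (hA j))]; simp
  have hexp : (fun ω => (X ω - p * M) ^ 2) = fun ω => X ω ^ 2 - (2 * (p * M)) * X ω + (p * M) ^ 2 := by
    funext ω; ring
  have hint : Integrable (fun ω => (X ω - p * M) ^ 2) μ := by
    rw [hexp]
    exact (hX2i.sub (hXi.const_mul _)).add (integrable_const _)
  have hval : ∫ ω, (X ω - p * M) ^ 2 ∂μ ≤ V := by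
    have hsub : Integrable (fun ω => X ω ^ 2 - (2 * (p * M)) * X ω) μ := hX2i.sub (hXi.const_mul _)
    rw [hexp, integral_add hsub (integrable_const _),
      integral_sub hX2i (hXi.const_mul _), integral_const_mul, hI1, hI2, integral_const]
    simp only [probReal_univ, smul_eq_mul, one_mul]
    nlinarith
  have hmk := mul_meas_ge_le_integral_of_nonneg (μ := μ) (f := fun ω => (X ω - p * M) ^ 2)
    (Eventually.of_forall fun ω => sq_nonneg _) hint ((p * M / 2) ^ 2)
  refine le_trans (mul_le_mul_of_nonneg_left ?_ (sq_nonneg _)) (hmk.trans hval)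
  apply measureReal_mono
  · intro ω hω
    have h1 : X ω ≤ p * M / 2 := by rw [hXc]; exact hω
    have h2 : 0 ≤ X ω := by rw [hXc]; positivity
    show (p * M / 2) ^ 2 ≤ (X ω - p * M) ^ 2
    have h3 : 0 ≤ p * M := by positivity
    nlinarith
  · exact measure_ne_top _ _

lemma count_bound (N : ℕ) (η δ : ℝ) (hδ : 0 < δ) (hη : 0 ≤ η)
    (hpair : ∀ (n : ℕ) (f g : HS n), ‖f‖ = 1 → ‖g‖ = 1 → |inner ℝ f g| < δ →
      (stdGaussian (HSN n N)).real {ω | XL N f ω ∈ posO N ∧ XL N g ω ∈ posO N} ≤ pp N ^ 2 + η)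
    (n : ℕ) {ι : Type*} (S : Finset ι) (u : ι → HS n) (L B : ℝ) (hL : 0 < L)
    (hu : ∀ i ∈ S, L ≤ ‖u i‖ ^ 2)
    (hB : ∀ i ∈ S, ∑ j ∈ S, (inner ℝ (u i) (u j) : ℝ) ^ 2 ≤ B * ‖u i‖ ^ 2) :
    (pp N * S.card / 2) ^ 2 * (stdGaussian (HSN n N)).real
      {ω | ((S.filter (fun i => XL N (u i) ω ∈ posO N)).card : ℝ) ≤ pp N * S.card / 2} ≤
      η * (S.card : ℝ) ^ 2 + S.card * (B / (L * δ ^ 2)) := by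
  have hup : ∀ i ∈ S, 0 < ‖u i‖ := by
    intro i hi
    have h1 := hu i hi
    rcases (norm_nonneg (u i)).eq_or_lt with h | h
    · rw [← h] at h1; norm_num at h1; linarith
    · exact h
  have hnorm : ∀ i ∈ S, ‖(‖u i‖⁻¹ • u i)‖ = 1 := by
    intro i hi
    rw [norm_smul, norm_inv, norm_norm, inv_mul_cancel₀ (hup i hi).ne']
  have hmem : ∀ i ∈ S, ∀ ω, XL N (‖u i‖⁻¹ • u i) ω ∈ posO N ↔ XL N (u i) ω ∈ posO N := by
    intro i hi ω
    rw [XL_smul, posO_smul (inv_pos.2 (hup i hi))]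
  refine second_moment (stdGaussian (HSN n N)) S (fun i => {ω | XL N (u i) ω ∈ posO N})
    (fun i => (XL N (u i)).continuous.measurable (posO_open N).measurableSet) (pp N) _ (pp_pos N) ?_ ?_
  · intro i hi
    have : {ω | XL N (u i) ω ∈ posO N} = XL N (‖u i‖⁻¹ • u i) ⁻¹' posO N := by
      ext ω; exact (hmem i hi ω).symm
    rw [this, ← map_measureReal_apply (XL N _).continuous.measurable (posO_open N).measurableSet,
      XL_std N _ (hnorm i hi)]
    rfl
  · have key : ∀ i ∈ S, ∀ j ∈ S, (stdGaussian (HSN n N)).real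
        ({ω | XL N (u i) ω ∈ posO N} ∩ {ω | XL N (u j) ω ∈ posO N}) ≤
        (pp N ^ 2 + η) + (inner ℝ (u i) (u j) : ℝ) ^ 2 / (‖u i‖ ^ 2 * (L * δ ^ 2)) := by
      intro i hi j hj
      have e : {ω | XL N (u i) ω ∈ posO N} ∩ {ω | XL N (u j) ω ∈ posO N} =
          {ω | XL N (‖u i‖⁻¹ • u i) ω ∈ posO N ∧ XL N (‖u j‖⁻¹ • u j) ω ∈ posO N} := by
        ext ω; exact (and_congr (hmem i hi ω) (hmem j hj ω)).symm
      have h1 := hup i hi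
      have h2 := hup j hj
      have h3 := hu j hj
      rw [e]
      by_cases hc : |inner ℝ (‖u i‖⁻¹ • u i) (‖u j‖⁻¹ • u j)| < δ
      · refine (hpair n _ _ (hnorm i hi) (hnorm j hj) hc).trans ?_
        have : 0 ≤ (inner ℝ (u i) (u j) : ℝ) ^ 2 / (‖u i‖ ^ 2 * (L * δ ^ 2)) := by positivity
        linarith
      · refine measureReal_le_one.trans ?_
        have : 1 ≤ (inner ℝ (u i) (u j) : ℝ) ^ 2 / (‖u i‖ ^ 2 * (L * δ ^ 2)) := by
          rw [one_le_div (by positivity)]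
          rw [not_lt, inner_smul_left, inner_smul_right] at hc
          simp only [conj_trivial] at hc
          rw [abs_mul, abs_mul, abs_of_pos (inv_pos.2 h1), abs_of_pos (inv_pos.2 h2)] at hc
          have h4 : δ * (‖u i‖ * ‖u j‖) ≤ |inner ℝ (u i) (u j)| := by
            have := mul_le_mul_of_nonneg_right hc (mul_pos h1 h2).le
            refine this.trans (le_of_eq ?_)
            field_simp
          have h5 : (δ * (‖u i‖ * ‖u j‖)) ^ 2 ≤ |inner ℝ (u i) (u j)| ^ 2 := by
            gcongr
          rw [sq_abs] at h5
          have h6 : ‖u i‖ ^ 2 * (L * δ ^ 2) ≤ ‖u i‖ ^ 2 * (‖u j‖ ^ 2 * δ ^ 2) := by gcongr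
          nlinarith
        have := sq_nonneg (pp N)
        linarith
    calc _ ≤ ∑ i ∈ S, ∑ j ∈ S, ((pp N ^ 2 + η) + (inner ℝ (u i) (u j) : ℝ) ^ 2 / (‖u i‖ ^ 2 * (L * δ ^ 2))) :=
          Finset.sum_le_sum fun i hi => Finset.sum_le_sum fun j hj => key i hi j hj
      _ ≤ ∑ i ∈ S, (S.card * (pp N ^ 2 + η) + B / (L * δ ^ 2)) := by
          apply Finset.sum_le_sum
          intro i hi
          rw [Finset.sum_add_distrib, ← Finset.sum_div, Finset.sum_const, nsmul_eq_mul]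
          refine add_le_add le_rfl ?_
          have h1 := hup i hi
          rw [div_le_div_iff₀ (by positivity) (by positivity)]
          have := mul_le_mul_of_nonneg_right (hB i hi) (by positivity : 0 ≤ L * δ ^ 2)
          nlinarith
      _ = _ := by
          rw [Finset.sum_const, nsmul_eq_mul]; ring

open ProbabilityTheory

lemma countPos_meas (D : Set (ℝ × ℝ)) (N n : ℕ) (α ρ : ℝ) : Measurable (countPos D N n α ρ) := by
  have e : countPos D N n α ρ = fun φ => ∑ c ∈ centersF D n α (0, 0),
      if (boxAt (evenSide n α) c ⊆ latBall ρ ∧ ∀ i : Fin N, 0 < harmExt n N (gridK D n α (0, 0)) c φ i)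
        then 1 else 0 := by
    funext φ
    rw [countPos, Finset.card_filter]
  rw [e]
  apply Finset.measurable_sum
  intro c _
  apply Measurable.ite _ measurable_const measurable_const
  have hm : Measurable (harmExt n N (gridK D n α (0, 0)) c) :=
    (stronglyMeasurable_condExp.mono (mGrid_le N _)).measurable
  have : {φ : Conf N | boxAt (evenSide n α) c ⊆ latBall ρ ∧
      ∀ i : Fin N, 0 < harmExt n N (gridK D n α (0, 0)) c φ i} =
      {φ : Conf N | boxAt (evenSide n α) c ⊆ latBall ρ} ∩
        harmExt n N (gridK D n α (0, 0)) c ⁻¹' posO N := by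
    ext φ; rfl
  rw [this]
  exact (MeasurableSet.const _).inter (hm (posO_open N).measurableSet)

lemma gpt_box (a m : ℕ) (ρ : ℝ) (ha : 1 ≤ a) (hρ : 0 < ρ) (hm : 4 * ((m : ℝ) * a) ≤ ρ) (p : ℕ × ℕ)
    (hp : p ∈ gidx m) : boxAt (a : ℤ) (gpt a p) ⊆ latBall ρ := by
  intro y hy
  simp only [gidx, Finset.mem_product, Finset.mem_range] at hp
  simp only [boxAt, gpt, Set.mem_ofPred_eq] at hy
  have ha' : (1 : ℝ) ≤ a := by exact_mod_cast ha
  have bd : ∀ (k : ℕ) (z : ℤ), k < m → 2 * |z - (k : ℤ) * a| ≤ a → |(z : ℝ)| ≤ ρ / 4 := by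
    intro k z hk hz
    have h1 : (2 : ℝ) * |(z : ℝ) - k * a| ≤ a := by exact_mod_cast hz
    have h2 : (k : ℝ) + 1 ≤ m := by exact_mod_cast hk
    have h3 : ((k : ℝ) + 1) * a ≤ m * a := by gcongr
    have h4 : |(z : ℝ)| ≤ |(z : ℝ) - k * a| + k * a := by
      have := abs_add_le ((z : ℝ) - k * a) (k * a)
      rw [sub_add_cancel] at this
      rwa [abs_of_nonneg (by positivity : (0:ℝ) ≤ k * a)] at this
    linarith
  have h1 := bd p.1 y.1 hp.1 hy.1
  have h2 := bd p.2 y.2 hp.2 hy.2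
  show Real.sqrt _ < ρ
  rw [Real.sqrt_lt' hρ]
  have h3 : (y.1 : ℝ) ^ 2 ≤ (ρ / 4) ^ 2 := by rw [← sq_abs]; gcongr
  have h4 : (y.2 : ℝ) ^ 2 ≤ (ρ / 4) ^ 2 := by rw [← sq_abs]; gcongr
  nlinarith

lemma gpt_small (n a m : ℕ) (hm : 16 * (m * a) ≤ n) (p : ℕ × ℕ) (hp : p ∈ gidx m) :
    16 * |(gpt a p).1| ≤ n ∧ 16 * |(gpt a p).2| ≤ n := by
  simp only [gidx, Finset.mem_product, Finset.mem_range] at hp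
  simp only [gpt]
  have h1 : p.1 * a ≤ m * a := Nat.mul_le_mul_right _ hp.1.le
  have h2 : p.2 * a ≤ m * a := Nat.mul_le_mul_right _ hp.2.le
  rw [abs_of_nonneg (by positivity), abs_of_nonneg (by positivity)]
  constructor <;> exact_mod_cast (by omega)

lemma gpt_inj (a : ℕ) (ha : 1 ≤ a) : Function.Injective (gpt a) := by
  rintro ⟨p1, p2⟩ ⟨q1, q2⟩ h
  simp only [gpt, Prod.mk.injEq] at h
  have ha' : (a : ℤ) ≠ 0 := by exact_mod_cast (by omega)
  have h1 := mul_right_cancel₀ ha' h.1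
  have h2 := mul_right_cancel₀ ha' h.2
  simp only [Prod.mk.injEq]
  exact ⟨by exact_mod_cast h1, by exact_mod_cast h2⟩

lemma uK_lower (n a R : ℕ) (ha : 2 ≤ a) (hae : ∃ b : ℤ, (a : ℤ) = 2 * b) (haR : a < R) (hR : 4 * R ≤ n)
    (K : Set Site) (c : Site) (hc : 16 * |c.1| ≤ n ∧ 16 * |c.2| ≤ n) (hK : innerBdryAt (a : ℤ) c ⊆ K) :
    (Real.log R - Real.log a) / 16 ≤ ‖uK n K c‖ ^ 2 := by
  set H : ℝ := ∑ j ∈ Finset.Ico a R, 1 / (j : ℝ) with hH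
  have hHlog : Real.log R - Real.log a ≤ H := harm_ge_log a R (by omega) haR.le
  have hout : ∀ x, x ∉ Lam n → testF a R c x = 0 := by
    intro x hx
    apply testF_zero
    rw [mem_Lam] at hx
    simp only [Int.abs_eq_natAbs] at hx hc
    unfold nd
    omega
  set F : HS n := mkHS n (testF a R c) with hF
  have eF : ext0 n F = testF a R c := ext0_mk hout
  have hin : ∀ z ∈ boxAt (a : ℤ) c, ext0 n F z = H := by
    intro z hz
    rw [eF]
    apply testF_const
    simp only [boxAt, Set.mem_ofPred_eq, Int.abs_eq_natAbs] at hz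
    unfold nd
    omega
  have hcc : ext0 n F c = H := hin c (by simp [boxAt])
  have h1 := inner_uK_test n K c a hae (by positivity) hK F (fun z hz => by rw [hin z hz, hcc])
  rw [hcc] at h1
  have hFn : ‖F‖ ^ 2 ≤ (1 / (4 * π)) * (160 * H) := by
    rw [hs_norm_sq, eF]
    gcongr
    exact testF_energy n a R ha haR c
  have hH0 : 0 < H := by
    apply Finset.sum_pos
    · intro j hj
      have := (Finset.mem_Ico.1 hj).1
      have : (0 : ℝ) < j := by exact_mod_cast (by omega)
      positivity
    · exact Finset.nonempty_Ico.2 haR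
  have hcs := real_inner_le_norm (uK n K c) F
  rw [h1] at hcs
  have h2 : H ^ 2 ≤ ‖uK n K c‖ ^ 2 * ‖F‖ ^ 2 := by
    rw [← mul_pow]; gcongr
  have h3 : H ^ 2 ≤ ‖uK n K c‖ ^ 2 * ((1 / (4 * π)) * (160 * H)) :=
    h2.trans (by gcongr)
  have hpi := Real.pi_gt_three
  have h4 : (1 / (4 * π)) * (160 * H) ≤ 16 * H := by
    rw [div_mul_eq_mul_div, div_le_iff₀ (by positivity)]
    nlinarith
  have h5 : H ^ 2 ≤ ‖uK n K c‖ ^ 2 * (16 * H) := h3.trans (by gcongr)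
  have h6 : H ≤ 16 * ‖uK n K c‖ ^ 2 := by
    by_contra hcon
    push Not at hcon
    nlinarith
  linarith

open ProbabilityTheory

lemma finite_n (N : ℕ) (η δ : ℝ) (hδ : 0 < δ) (hη : 0 ≤ η)
    (hpair : ∀ (n : ℕ) (f g : HS n), ‖f‖ = 1 → ‖g‖ = 1 → |inner ℝ f g| < δ →
      (stdGaussian (HSN n N)).real {ω | XL N f ω ∈ posO N ∧ XL N g ω ∈ posO N} ≤ pp N ^ 2 + η)
    (D : Set (ℝ × ℝ)) (n : ℕ) (α ρ T : ℝ) (hρ : 0 < ρ) (hρ4 : ρ ≤ n / 4)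
    (hD : ∀ x : Site, x ∈ latBall ρ → x ∈ Dn D n)
    (a q m R : ℕ) (hea : evenSide n α = (a : ℤ)) (ha : 2 ≤ a) (hq : 1 ≤ q) (haq : a * q ≤ n + 1)
    (hm : 4 * ((m : ℝ) * a) ≤ ρ) (haR : a < R) (hR : 4 * R ≤ n)
    (hT : T ≤ pp N * ((m : ℝ) * m) / 2) :
    (pp N * ((m : ℝ) * m) / 2) ^ 2 *
      (gff n N).real {φ : Conf N | (countPos D N n α ρ φ : ℝ) ≤ T} ≤
      η * ((m : ℝ) * m) ^ 2 + ((m : ℝ) * m) * ((4 * π * (4 * (1 + Real.log (n + 1)) * ((q : ℝ) + 1) ^ 2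
        + 4 * (m : ℝ) ^ 2 * (Real.log (n + 1) - Real.log (a * q)))) /
          (((Real.log R - Real.log a) / 16) * δ ^ 2)) := by
  set K := gridK D n α (0, 0) with hK
  have hae : ∃ b : ℤ, (a : ℤ) = 2 * b := ⟨round ((n : ℝ) ^ α / 2), by rw [← hea]; rfl⟩
  have hm16 : 16 * (m * a) ≤ n := by
    have : (16 : ℝ) * (m * a) ≤ n := by linarith
    exact_mod_cast this
  have hbox := gpt_box a m ρ (by omega) hρ hm
  have hsm := gpt_small n a m hm16
  have hLam : ∀ p ∈ gidx m, gpt a p ∈ Lam n := by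
    intro p hp
    have := hsm p hp
    rw [mem_Lam]
    simp only [Int.abs_eq_natAbs] at *
    omega
  have hcen : ∀ p ∈ gidx m, gpt a p ∈ centersF D n α (0, 0) := by
    intro p hp
    rw [centersF, Finset.mem_filter]
    refine ⟨hLam p hp, ⟨p.1, p.2, ?_⟩, ?_⟩
    · rw [hea]; simp [gpt]
    · rw [hea]; exact fun x hx => hD x (hbox p hp hx)
  have hbd : ∀ p ∈ gidx m, innerBdryAt (a : ℤ) (gpt a p) ⊆ K := by
    intro p hp x hx
    rw [hK, gridK, hea]
    exact Set.mem_biUnion (hcen p hp) hx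
  have hcard : (((gidx m).card : ℕ) : ℝ) = (m : ℝ) * m := by simp [gidx]
  have hmain := count_bound N η δ hδ hη hpair n (gidx m) (fun p => uK n K (gpt a p))
    ((Real.log R - Real.log a) / 16)
    (4 * π * (4 * (1 + Real.log (n + 1)) * ((q : ℝ) + 1) ^ 2
        + 4 * (m : ℝ) ^ 2 * (Real.log (n + 1) - Real.log (a * q))))
    (by
      have : Real.log a < Real.log R := Real.log_lt_log (by exact_mod_cast (by omega)) (by exact_mod_cast haR)
      linarith)
    (fun p hp => uK_lower n a R ha hae haR hR K _ (hsm p hp) (hbd p hp))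
    (by
      intro p hp
      simp only [inner_uK]
      refine (avg_bound (ext0_out (uK n K (gpt a p))) a q m (by omega) hq haq hLam).trans (le_of_eq ?_)
      rw [hs_norm_sq]
      field_simp)
  rw [hcard] at hmain
  refine le_trans (mul_le_mul_of_nonneg_left ?_ (sq_nonneg _)) hmain
  have hms : MeasurableSet {φ : Conf N | (countPos D N n α ρ φ : ℝ) ≤ T} := by
    have h1 : Measurable (fun φ : Conf N => (countPos D N n α ρ φ : ℝ)) :=
      (measurable_from_top (f := fun k : ℕ => (k : ℝ))).comp (countPos_meas D N n α ρ)
    exact h1 measurableSet_Iic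
  rw [gff_eq, map_measureReal_apply (toConf_meas n N) hms, measureReal_def, measureReal_def]
  apply ENNReal.toReal_mono (measure_ne_top _ _)
  apply measure_mono_ae
  have hall : ∀ᵐ g ∂(stdGaussian (HSN n N)), ∀ p : ℕ × ℕ,
      harmExt n N K (gpt a p) (toConf n N g) = XL N (uK n K (gpt a p)) g :=
    ae_all_iff.2 fun p => harmExt_ae n N K (gpt a p)
  filter_upwards [hall] with g hg
  intro hle
  have hle' : (countPos D N n α ρ (toConf n N g) : ℝ) ≤ T := hle
  show (((gidx m).filter (fun p => XL N (uK n K (gpt a p)) g ∈ posO N)).card : ℝ) ≤ pp N * ((m : ℝ) * m) / 2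
  have hc : ((gidx m).filter (fun p => XL N (uK n K (gpt a p)) g ∈ posO N)).card ≤
      countPos D N n α ρ (toConf n N g) := by
    unfold countPos
    apply Finset.card_le_card_of_injOn (gpt a)
    · intro p hp
      have hp1 := Finset.mem_filter.1 (Finset.mem_coe.1 hp)
      rw [Finset.mem_coe, Finset.mem_filter]
      refine ⟨hcen p hp1.1, ?_, ?_⟩
      · rw [hea]; exact hbox p hp1.1
      · intro i
        rw [← hK, hg p]
        exact hp1.2 i
    · exact (gpt_inj a (by omega)).injOn
  have : (((gidx m).filter (fun p => XL N (uK n K (gpt a p)) g ∈ posO N)).card : ℝ) ≤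
      countPos D N n α ρ (toConf n N g) := by exact_mod_cast hc
  linarith

set_option maxHeartbeats 2000000 in
lemma asym (r : ℕ → ℝ) (hrpos : ∀ n, 0 < r n) (hrquarter : ∀ n, r n ≤ 1 / 4)
    (hrlog : (fun n : ℕ => Real.log (1 / r n)) =o[atTop] fun n : ℕ => Real.log n)
    (α ξ : ℝ) (hα : α ∈ Set.Ioo (0 : ℝ) 1) (hξ : 0 < ξ) (P : ℝ) (hP : 0 < P) (ε : ℝ) (hε : 0 < ε) :
    ∀ᶠ n : ℕ in atTop, ∃ a q m R : ℕ, evenSide n α = (a : ℤ) ∧ 2 ≤ a ∧ 1 ≤ q ∧ a * q ≤ n + 1 ∧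
      4 * ((m : ℝ) * a) ≤ r n * n ∧ a < R ∧ 4 * R ≤ n ∧
      (n : ℝ) ^ (2 * (1 - α) - ξ) ≤ P * ((m : ℝ) * m) / 2 ∧ 0 < m ∧
      4 * (1 + Real.log (n + 1)) * ((q : ℝ) + 1) ^ 2
        + 4 * (m : ℝ) ^ 2 * (Real.log (n + 1) - Real.log (a * q)) ≤
        ε * (m : ℝ) ^ 2 * (Real.log R - Real.log a) := by
  obtain ⟨hα0, hα1⟩ := hα
  set w := ε * (1 - α) / 2 with hw
  have hw0 : 0 < w := by have : 0 < 1 - α := by linarith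
                         positivity
  set θ := min 1 (w / 64) with hθ
  have hθ0 : 0 < θ := lt_min one_pos (by positivity)
  have hθ1 : θ ≤ 1 := min_le_left _ _
  have hθw : θ ≤ w / 64 := min_le_right _ _
  set κ := min (ξ / 4) (min ((1 - α) / 2) (w / 16)) with hκ
  have hκ0 : 0 < κ := lt_min (by positivity) (lt_min (by linarith) (by positivity))
  have hκ1 : κ ≤ ξ / 4 := min_le_left _ _
  have hκ2 : κ ≤ (1 - α) / 2 := (min_le_right _ _).trans (min_le_left _ _)
  have hκ3 : κ ≤ w / 16 := (min_le_right _ _).trans (min_le_right _ _)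
  have hlog : Tendsto (fun n : ℕ => Real.log n) atTop atTop :=
    Real.tendsto_log_atTop.comp tendsto_natCast_atTop_atTop
  have hmul : ∀ c : ℝ, 0 < c → ∀ b : ℝ, ∀ᶠ n : ℕ in atTop, b ≤ c * Real.log n := fun c hc b =>
    (hlog.const_mul_atTop hc).eventually_ge_atTop b
  filter_upwards [eventually_ge_atTop 8, hmul 1 one_pos 2, hrlog.bound hκ0, hmul α hα0 (Real.log 3),
    hmul κ hκ0 (Real.log 16 - Real.log θ), hmul ((1 - α) / 2) (by linarith) (Real.log 17),
    hmul (1 - κ - α) (by linarith) (Real.log (32 / θ)), hmul (ξ / 2) (by positivity) (Real.log (512 / P))]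
    with n hn8 hl2 hr hF2 hF3 hF4 hF5 hF6
  set l := Real.log n with hl
  have hn0 : (0 : ℝ) < n := by exact_mod_cast (by omega)
  have hn8' : (8 : ℝ) ≤ n := by exact_mod_cast hn8
  have hr0 := hrpos n
  have pow_eq : ∀ s : ℝ, (n : ℝ) ^ s = Real.exp (s * l) := by
    intro s; rw [Real.rpow_def_of_pos hn0, mul_comm]
  have of_log : ∀ (b s : ℝ), 0 < b → Real.log b ≤ s * l → b ≤ (n : ℝ) ^ s := by
    intro b s hb h
    rw [pow_eq, ← Real.log_le_iff_le_exp hb]; exact h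
  -- the basic estimates
  have hx3 : 3 ≤ (n : ℝ) ^ α := of_log _ _ (by norm_num) hF2
  set x := (n : ℝ) ^ α with hx
  have hlr : Real.log (1 / r n) ≤ κ * l := by
    rw [Real.norm_eq_abs, Real.norm_eq_abs, abs_of_nonneg (by linarith : 0 ≤ l)] at hr
    exact (le_abs_self _).trans hr
  have hrge : (n : ℝ) ^ (-κ) ≤ r n := by
    rw [pow_eq, ← Real.le_log_iff_exp_le hr0]
    rw [one_div, Real.log_inv] at hlr
    linarith
  obtain ⟨a, hea⟩ : ∃ a : ℕ, evenSide n α = (a : ℤ) := by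
    refine ⟨(evenSide n α).toNat, ?_⟩
    rw [Int.toNat_of_nonneg]
    unfold evenSide
    have : 0 ≤ round (x / 2) := by
      rw [round_eq]
      apply Int.floor_nonneg.2
      linarith
    rw [← hx]
    omega
  have hax : |(a : ℝ) - x| ≤ 1 := by
    have h1 := abs_sub_round (x / 2)
    have h2 : (a : ℝ) = 2 * (round (x / 2) : ℝ) := by
      have : ((a : ℤ) : ℝ) = ((evenSide n α : ℤ) : ℝ) := by rw [hea]
      rw [evenSide] at this
      push_cast at this
      exact this
    rw [h2, show 2 * (round (x / 2) : ℝ) - x = -(2 * (x / 2 - round (x / 2))) by ring, abs_neg, abs_mul]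
    norm_num
    linarith
  obtain ⟨hax1, hax2⟩ := abs_le.1 hax
  have ha2 : (2 : ℝ) ≤ a := by linarith
  have ha2' : 2 ≤ a := by exact_mod_cast ha2
  have haup : (a : ℝ) ≤ 2 * x := by linarith
  have ha0 : (0 : ℝ) < a := by linarith
  -- the scale `R`
  set R := n / 4 with hR
  have hR4 : 4 * R ≤ n := by omega
  have hRge : (n : ℝ) / 8 ≤ R := by
    have : n ≤ 8 * R := by omega
    have : (n : ℝ) ≤ 8 * R := by exact_mod_cast this
    linarith
  have hlogdiff : (1 - α) / 2 * l ≤ Real.log R - Real.log a ∧ a < R := by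
    have h1 : Real.log ((n : ℝ) / 8) ≤ Real.log R := Real.log_le_log (by positivity) hRge
    have h2 : Real.log a ≤ Real.log (2 * x) := Real.log_le_log ha0 haup
    rw [Real.log_div (by positivity) (by norm_num)] at h1
    rw [Real.log_mul (by norm_num) (by positivity), hx, Real.log_rpow hn0] at h2
    have h3 : Real.log 8 + Real.log 2 = Real.log 16 := by
      rw [← Real.log_mul (by norm_num) (by norm_num)]; norm_num
    have h4 : Real.log 16 < Real.log 17 := Real.log_lt_log (by norm_num) (by norm_num)
    have h5 : (1 - α) / 2 * l ≤ Real.log R - Real.log a := by linarith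
    refine ⟨h5, ?_⟩
    have h6 : 0 < Real.log 17 := Real.log_pos (by norm_num)
    have h7 : Real.log a < Real.log R := by linarith
    have hR0 : (0 : ℝ) < R := by linarith
    exact_mod_cast (Real.log_lt_log_iff ha0 hR0).1 h7
  obtain ⟨hld, haR⟩ := hlogdiff
  -- the number of boxes
  set Y := (n : ℝ) ^ (1 - κ - α) with hY
  have hY32 : 32 / θ ≤ Y := of_log _ _ (by positivity) hF5
  have hYm : Y / 16 ≤ r n * n / (8 * a) := by
    have e1 : (n : ℝ) ^ (-κ) * n = Y * x := by
      rw [hY, hx, ← Real.rpow_add hn0]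
      nth_rewrite 2 [← Real.rpow_one (n : ℝ)]
      rw [← Real.rpow_add hn0]
      congr 1; ring
    have e2 : Y * x ≤ r n * n := by rw [← e1]; gcongr
    have hY0 : 0 < Y := by positivity
    rw [div_le_div_iff₀ (by norm_num) (by positivity)]
    have : Y * a ≤ Y * (2 * x) := by gcongr
    have h9 : Y * (8 * a) = 8 * (Y * a) := by ring
    have h10 : Y * (2 * x) = 2 * (Y * x) := by ring
    rw [h9]
    linarith
  set m := ⌊r n * n / (4 * a)⌋₊ with hm
  have hmle : (m : ℝ) ≤ r n * n / (4 * a) := Nat.floor_le (by positivity)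
  have hmlt : r n * n / (4 * a) < m + 1 := Nat.lt_floor_add_one _
  have hhalf : r n * n / (4 * a) = 2 * (r n * n / (8 * a)) := by field_simp; norm_num
  have h32 : 32 ≤ 32 / θ := by rw [le_div_iff₀ hθ0]; linarith
  have hmge : r n * n / (8 * a) ≤ m := by linarith
  have hmY : Y / 16 ≤ m := hYm.trans hmge
  have hmθ : 2 ≤ θ * m := by
    have : 2 / θ ≤ m := by
      have : 32 / θ = 16 * (2 / θ) := by ring
      linarith
    rw [div_le_iff₀ hθ0] at this
    linarith
  have hm0 : (0 : ℝ) < m := by linarith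
  set q := ⌈θ * m⌉₊ with hq
  have hqge : θ * m ≤ q := Nat.le_ceil _
  have hqlt : (q : ℝ) < θ * m + 1 := Nat.ceil_lt_add_one (by positivity)
  have hq1 : 1 ≤ q := by
    have : (1 : ℝ) ≤ q := by linarith
    exact_mod_cast this
  have hqm : q ≤ m := by
    rw [hq, Nat.ceil_le]
    exact mul_le_of_le_one_left hm0.le hθ1
  have hm4 : 4 * ((m : ℝ) * a) ≤ r n * n := by
    rw [le_div_iff₀ (by positivity)] at hmle
    linarith
  have haq : a * q ≤ n + 1 := by
    have h1 : a * q ≤ a * m := Nat.mul_le_mul_left _ hqm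
    have h2 : (a : ℝ) * m ≤ n := by
      have := mul_le_mul_of_nonneg_right (hrquarter n) hn0.le
      have h3 : (a : ℝ) * m = m * a := mul_comm _ _
      rw [h3]
      linarith
    have h3 : a * m ≤ n := by exact_mod_cast h2
    omega
  refine ⟨a, q, m, R, hea, ha2', hq1, haq, hm4, haR, hR4, ?_, by exact_mod_cast hm0, ?_⟩
  · have h1 : 512 / P ≤ (n : ℝ) ^ (ξ / 2) := of_log _ _ (by positivity) hF6
    have e1 : (n : ℝ) ^ (2 * (1 - α) - ξ) * (n : ℝ) ^ (ξ / 2) ≤ Y * Y := by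
      rw [hY, ← Real.rpow_add hn0, ← Real.rpow_add hn0]
      apply Real.rpow_le_rpow_of_exponent_le (by linarith)
      linarith
    have h2 : Y / 16 * (Y / 16) ≤ (m : ℝ) * m := by gcongr
    have h3 : (n : ℝ) ^ (2 * (1 - α) - ξ) * (512 / P) ≤ Y * Y := le_trans (by gcongr) e1
    rw [mul_div_assoc', div_le_iff₀ hP] at h3
    have h4 := mul_le_mul_of_nonneg_left h2 hP.le
    have h5 : P * (Y / 16 * (Y / 16)) = Y * Y * P / 256 := by ring
    linarith
  · have hlog1 : Real.log (n + 1) ≤ Real.log 2 + l := by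
      rw [hl, ← Real.log_mul (by norm_num) hn0.ne']
      exact Real.log_le_log (by positivity) (by linarith)
    have hlog2 : Real.log 2 < 1 := by linarith [Real.log_two_lt_d9]
    have hA : 1 + Real.log (n + 1) ≤ 2 * l := by linarith
    have hB : ((q : ℝ) + 1) ^ 2 ≤ (2 * (θ * m)) ^ 2 := by
      have : (q : ℝ) + 1 ≤ 2 * (θ * m) := by linarith
      gcongr
    have hC : Real.log (n + 1) - Real.log (a * q) ≤ 2 * κ * l := by
      have h1 : θ * r n * n / 8 ≤ (a : ℝ) * q := by
        have h2 : (a : ℝ) * (θ * (r n * n / (8 * a))) ≤ a * q := by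
          gcongr
          exact le_trans (by gcongr) hqge
        have h3 : (a : ℝ) * (θ * (r n * n / (8 * a))) = θ * r n * n / 8 := by field_simp
        linarith
      have h2 := Real.log_le_log (by positivity) h1
      rw [Real.log_div (by positivity) (by norm_num), Real.log_mul (by positivity) hn0.ne',
        Real.log_mul hθ0.ne' hr0.ne'] at h2
      rw [one_div, Real.log_inv] at hlr
      have h3 : Real.log 8 + Real.log 2 = Real.log 16 := by
        rw [← Real.log_mul (by norm_num) (by norm_num)]; norm_num
      linarith
    have hl0 : 0 < l := by linarith
    have hlogn : 0 ≤ 1 + Real.log (n + 1) := by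
      have := Real.log_nonneg (by linarith : (1 : ℝ) ≤ n + 1)
      linarith
    have hm2 : (0 : ℝ) < (m : ℝ) ^ 2 := by positivity
    have hθ2 : θ ^ 2 ≤ w / 64 := by
      rw [sq]
      exact (mul_le_of_le_one_left hθ0.le hθ1).trans hθw
    calc _ ≤ 4 * (2 * l) * (2 * (θ * m)) ^ 2 + 4 * (m : ℝ) ^ 2 * (2 * κ * l) := by gcongr
      _ = (32 * θ ^ 2 + 8 * κ) * (l * (m : ℝ) ^ 2) := by ring
      _ ≤ w * (l * (m : ℝ) ^ 2) := by
          apply mul_le_mul_of_nonneg_right _ (by positivity)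
          linarith
      _ = ε * (m : ℝ) ^ 2 * ((1 - α) / 2 * l) := by rw [hw]; ring
      _ ≤ _ := by gcongr

lemma final_alg (p M V η δ ε X G ε₀ : ℝ) (hp : 0 < p) (hM : 0 < M) (hδ : 0 < δ) (hG : 0 < G)
    (hη : η = ε₀ * p ^ 2 / 8) (hε : ε = ε₀ * p ^ 2 * δ ^ 2 / (512 * π))
    (hX : X ≤ ε * M * G)
    (h : (p * M / 2) ^ 2 * V ≤ η * M ^ 2 + M * ((4 * π * X) / ((G / 16) * δ ^ 2))) : V ≤ ε₀ := by
  have hpi := Real.pi_pos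
  have h1 : (4 * π * X) / ((G / 16) * δ ^ 2) ≤ (4 * π * (ε * M * G)) / ((G / 16) * δ ^ 2) := by
    gcongr
  have h2 : (4 * π * (ε * M * G)) / ((G / 16) * δ ^ 2) = ε₀ * p ^ 2 / 8 * M := by
    rw [hε]; field_simp; ring
  have h3 : (p * M / 2) ^ 2 * V ≤ (p * M / 2) ^ 2 * ε₀ := by
    calc _ ≤ η * M ^ 2 + M * (ε₀ * p ^ 2 / 8 * M) := by
          refine h.trans ?_
          gcongr
          rw [← h2]; exact h1
      _ = _ := by rw [hη]; ring
  exact le_of_mul_le_mul_left h3 (by positivity)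

lemma final_real (N : ℕ)
    (D : Set (ℝ × ℝ))
    (r : ℕ → ℝ) (hrpos : ∀ n, 0 < r n) (hrquarter : ∀ n, r n ≤ 1 / 4)
    (hrlog : (fun n : ℕ => Real.log (1 / r n)) =o[atTop] fun n : ℕ => Real.log n)
    (hrD : ∀ n : ℕ, ∀ x : Site, x ∈ latBall (r n * n) → x ∈ Dn D n)
    (α ξ : ℝ) (hα : α ∈ Set.Ioo (0 : ℝ) 1) (hξ : 0 < ξ) (ε₀ : ℝ) (hε₀ : 0 < ε₀) :
    ∀ᶠ n : ℕ in atTop, (gff n N).real {φ : Conf N |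
          (countPos D N n α (r n * n) φ : ℝ) ≤ (n : ℝ) ^ (2 * (1 - α) - ξ)} ≤ ε₀ := by
  have hpi := Real.pi_pos
  have hp := pp_pos N
  have hη : 0 < ε₀ * pp N ^ 2 / 8 := by positivity
  obtain ⟨δ, hδ, hpair⟩ := pair_bound N _ hη
  filter_upwards [asym r hrpos hrquarter hrlog α ξ hα hξ (pp N) hp
    (ε₀ * pp N ^ 2 * δ ^ 2 / (512 * π)) (by positivity)]
    with n ⟨a, q, m, R, hea, ha, hq, haq, hm, haR, hR, hT, hm0, hX⟩
  have hn0 : (0 : ℝ) < n := by exact_mod_cast (by omega : 0 < n)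
  have hm0' : (0 : ℝ) < m := by exact_mod_cast hm0
  have key := finite_n N _ δ hδ hη.le hpair D n α (r n * n) _ (mul_pos (hrpos n) hn0)
    (by have := mul_le_mul_of_nonneg_right (hrquarter n) hn0.le; linarith) (hrD n) a q m R hea ha hq haq
    hm haR hR hT
  have hG : 0 < Real.log R - Real.log a := by
    rw [sub_pos]
    apply Real.log_lt_log
    · exact_mod_cast (by omega : 0 < a)
    · exact_mod_cast haR
  refine final_alg (pp N) ((m : ℝ) * m) _ _ δ _ _ _ ε₀ hp (by positivity) hδ hG rfl rfl ?_ key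
  rw [← sq (m : ℝ)]
  exact hX

lemma final_thm (N : ℕ)
    (D : Set (ℝ × ℝ))
    (r : ℕ → ℝ) (hrpos : ∀ n, 0 < r n) (hrquarter : ∀ n, r n ≤ 1 / 4)
    (hrlog : (fun n : ℕ => Real.log (1 / r n)) =o[atTop] fun n : ℕ => Real.log n)
    (hrD : ∀ n : ℕ, ∀ x : Site, x ∈ latBall (r n * n) → x ∈ Dn D n)
    (α ξ : ℝ) (hα : α ∈ Set.Ioo (0 : ℝ) 1) (hξ : 0 < ξ) :
    Tendsto
      (fun n : ℕ =>
        gff n N {φ : Conf N |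
          (countPos D N n α (r n * n) φ : ℝ) ≤ (n : ℝ) ^ (2 * (1 - α) - ξ)})
      atTop (nhds 0) := by
  have h := final_real N D r hrpos hrquarter hrlog hrD α ξ hα hξ
  rw [ENNReal.tendsto_nhds_zero]
  intro e he
  by_cases hT : e = ∞
  · simp [hT]
  have he' : 0 < e.toReal := ENNReal.toReal_pos he.ne' hT
  filter_upwards [h _ he'] with n hn
  rw [measureReal_def] at hn
  exact (ENNReal.toReal_le_toReal (measure_ne_top _ _) hT).1 hn

end Helpers

/-- **Lemma (number of positive boxes).**
For any `α ∈ (0,1)` and `ξ > 0`, `P_n[N^α_+ ≤ n^{2(1-α)-ξ}] → 0` as `n → ∞`. -/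
theorem number_of_positive_boxes (N : ℕ) (hN : 0 < N)
    (D : Set (ℝ × ℝ)) (hDopen : IsOpen D) (hD0 : (0, 0) ∈ D) (hDsub : D ⊆ unitSq)
    (ι : ℝ) (hι : 0 < ι) (hdist : ∀ p ∈ D, ∀ q ∈ frontier unitSq, ι ≤ dist p q)
    (r : ℕ → ℝ) (hrpos : ∀ n, 0 < r n) (hrquarter : ∀ n, r n ≤ 1 / 4)
    (hrlog : (fun n : ℕ => Real.log (1 / r n)) =o[atTop] fun n : ℕ => Real.log n)
    (hrD : ∀ n : ℕ, ∀ x : Site, x ∈ latBall (r n * n) → x ∈ Dn D n)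
    (α ξ : ℝ) (hα : α ∈ Set.Ioo (0 : ℝ) 1) (hξ : 0 < ξ) :
    Tendsto
      (fun n : ℕ =>
        gff n N {φ : Conf N |
          (countPos D N n α (r n * n) φ : ℝ) ≤ (n : ℝ) ^ (2 * (1 - α) - ξ)})
      atTop (nhds 0) := by
  exact final_thm N D r hrpos hrquarter hrlog hrD α ξ hα hξ

end
end

section
/- Let N ∈ ℕ, 1 ≤ L ≤ N, ε > 0, and s ∈ ℝ^N with s¹ ≥ ⋯ ≥ s^N ≥ 0, s^L > 0, s^{L+1} = ⋯ = s^N = 0, and |s| ≤ 2(1−ε). Then there exist positive constants α, K, δ, ξ, ζ > 0 verifying simultaneously: (C1) δ² < min( (s^L)²/4 , (2α/(N K))·(2(1 − α/K) − ξ) ); (C2) ξ < min( (Σ_{i=1}^{L−1}(s^i−δ)² + (s^L+δ)²)/(2(1 − α/K)) , 2(1 − α/K) ); (C3) ξ > ζ + Σ_{i=1}^{L}(s^i−δ)²/(2α(1 − 1/K)³); (C4) K ≥ 2α/(1 − α − ζ/2); (C5) Σ_{i=1}^{L}(s^i−δ)² < 4α²(1 − 1/K)⁴. -/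
open MeasureTheory Real Filter Asymptotics
open scoped ENNReal NNReal Classical BigOperators

noncomputable section

theorem aux_bound (u : ℝ) (h0 : 0 < u) (h1 : u < 1 / 16) :
    1 ≤ (1 + 4 * u) * ((1 - u) * (1 - u / 4) ^ 3) := by
  have h3 : 1 - 3 / 4 * u ≤ (1 - u / 4) ^ 3 := by
    have : (1 - u / 4) ^ 3 - (1 - 3 / 4 * u) = u ^ 2 * (12 - u) / 64 := by ring
    have : 0 ≤ u ^ 2 * (12 - u) := mul_nonneg (sq_nonneg _) (by linarith)
    linarith
  have h4 : (1 + 4 * u) * ((1 - u) * (1 - 3 / 4 * u)) ≤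
      (1 + 4 * u) * ((1 - u) * (1 - u / 4) ^ 3) :=
    mul_le_mul_of_nonneg_left (mul_le_mul_of_nonneg_left h3 (by linarith)) (by linarith)
  have h5 : (1 + 4 * u) * ((1 - u) * (1 - 3 / 4 * u)) =
      1 + u * (9 / 4 - 25 / 4 * u + 3 * u ^ 2) := by ring
  have h6 : 0 ≤ u * (9 / 4 - 25 / 4 * u + 3 * u ^ 2) :=
    mul_nonneg h0.le (by nlinarith [sq_nonneg u])
  linarith

/-- **Lemma (the parameter constraints can be met).**
For `s ∈ ℝ^N` with `s¹ ≥ ⋯ ≥ s^N ≥ 0`, `s^L > 0`, `s^i = 0` for `i > L`, and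
`|s| ≤ 2(1-ε)`, there exist positive `α, K, δ, ξ, ζ` satisfying (C1)–(C5). -/
theorem parameter_constraints_nonempty (N L : ℕ) (hL1 : 1 ≤ L) (hLN : L ≤ N)
    (ε : ℝ) (hε : 0 < ε) (s : ℕ → ℝ)
    (hmono : ∀ i, 1 ≤ i → i < N → s (i + 1) ≤ s i)
    (hpos : ∀ i, 1 ≤ i → i ≤ N → 0 ≤ s i)
    (hsL : 0 < s L) (hzero : ∀ i, L < i → i ≤ N → s i = 0)
    (hnorm : Real.sqrt (∑ i ∈ Finset.Icc 1 N, s i ^ 2) ≤ 2 * (1 - ε)) :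
    ∃ α K δ ξ ζ : ℝ, 0 < α ∧ 0 < K ∧ 0 < δ ∧ 0 < ξ ∧ 0 < ζ ∧
      -- (C1)
      δ ^ 2 < min ((s L) ^ 2 / 4) (2 * α / (N * K) * (2 * (1 - α / K) - ξ)) ∧
      -- (C2)
      ξ < min ((∑ i ∈ Finset.Icc 1 (L - 1), (s i - δ) ^ 2 + (s L + δ) ^ 2) /
            (2 * (1 - α / K)))
          (2 * (1 - α / K)) ∧
      -- (C3)
      ζ + (∑ i ∈ Finset.Icc 1 L, (s i - δ) ^ 2) / (2 * α * (1 - 1 / K) ^ 3) < ξ ∧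
      -- (C4)
      2 * α / (1 - α - ζ / 2) ≤ K ∧
      -- (C5)
      (∑ i ∈ Finset.Icc 1 L, (s i - δ) ^ 2) < 4 * α ^ 2 * (1 - 1 / K) ^ 4 := by
  obtain ⟨l, rfl⟩ : ∃ l, L = l + 1 := ⟨L - 1, by omega⟩
  have hNpos : (0 : ℝ) < N := by
    have : 0 < N := by omega
    exact_mod_cast this
  obtain ⟨S0, hS0⟩ : ∃ x, x = ∑ i ∈ Finset.Icc 1 (l + 1), s i ^ 2 := ⟨_, rfl⟩
  have hS0N : S0 ≤ ∑ i ∈ Finset.Icc 1 N, s i ^ 2 := by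
    rw [hS0]
    apply Finset.sum_le_sum_of_subset_of_nonneg
    · exact Finset.Icc_subset_Icc le_rfl hLN
    · intros; positivity
  have hS0pos : 0 < S0 := by
    rw [hS0, Finset.sum_Icc_succ_top (by omega)]
    have : 0 ≤ ∑ i ∈ Finset.Icc 1 l, s i ^ 2 := Finset.sum_nonneg (by intros; positivity)
    positivity
  have hS04 : S0 < 4 := by
    have h1 : Real.sqrt S0 ≤ 2 * (1 - ε) := (Real.sqrt_le_sqrt hS0N).trans hnorm
    have h2 : 0 < Real.sqrt S0 := Real.sqrt_pos.mpr hS0pos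
    have h3 := Real.sq_sqrt hS0pos.le
    nlinarith only [h1, h2, h3, hε]
  obtain ⟨c, hc0, hc⟩ : ∃ c : ℝ, 0 < c ∧ c ^ 2 < 1 / (2 * N) * (2 - S0 / 2) := by
    have hq : 0 < 1 / (2 * (N : ℝ)) * (2 - S0 / 2) := by
      apply mul_pos (by positivity); linarith
    refine ⟨Real.sqrt (1 / (2 * (N : ℝ)) * (2 - S0 / 2) / 2), Real.sqrt_pos.mpr (by linarith), ?_⟩
    rw [Real.sq_sqrt (by linarith)]
    linarith
  let S : ℝ → ℝ := fun t => ∑ i ∈ Finset.Icc 1 (l + 1), (s i - c * t) ^ 2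
  have hSc : Continuous S := by
    apply continuous_finsetSum
    intro i _
    fun_prop
  have hSz : S 0 = S0 := by simp [S, hS0]
  let X : ℝ → ℝ := fun t => t ^ 2 + S t / (2 * (1 - t ^ 2) * (1 - t ^ 2 / 4) ^ 3) + t ^ 2
  have hXc : ContinuousAt X 0 := by
    have h1 : ContinuousAt S 0 := hSc.continuousAt
    have h2 : ContinuousAt (fun t : ℝ => 2 * (1 - t ^ 2) * (1 - t ^ 2 / 4) ^ 3) 0 := by fun_prop
    have h3 : ContinuousAt (fun t : ℝ => t ^ 2) 0 := by fun_prop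
    exact (h3.add (h1.div h2 (by norm_num))).add h3
  have hXz : X 0 = S0 / 2 := by simp [X, hSz]
  have e1 : ∀ᶠ t in nhds (0 : ℝ), (c * t) ^ 2 < s (l + 1) ^ 2 / 4 := by
    apply ContinuousAt.eventually_lt (by fun_prop) (by fun_prop)
    simp; positivity
  have e2 : ∀ᶠ t in nhds (0 : ℝ),
      c ^ 2 < (1 - t ^ 2) / (2 * N) * (2 * (1 - (1 - t ^ 2) * t ^ 2 / 4) - X t) := by
    apply ContinuousAt.eventually_lt (by fun_prop)
    · apply ContinuousAt.mul (by fun_prop)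
      exact ContinuousAt.sub (by fun_prop) hXc
    · rw [hXz]; norm_num at hc ⊢; exact hc
  have e3 : ∀ᶠ t in nhds (0 : ℝ), t * (1 + S t) < s (l + 1) * c := by
    apply ContinuousAt.eventually_lt (by fun_prop) (by fun_prop)
    simp; positivity
  have e4 : ∀ᶠ t in nhds (0 : ℝ), X t < 2 * (1 - (1 - t ^ 2) * t ^ 2 / 4) := by
    apply ContinuousAt.eventually_lt hXc (by fun_prop)
    rw [hXz]; norm_num; linarith
  have e5 : ∀ᶠ t in nhds (0 : ℝ), S t < 4 * (1 - t ^ 2) ^ 2 * (1 - t ^ 2 / 4) ^ 4 := by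
    apply ContinuousAt.eventually_lt (by fun_prop) (by fun_prop)
    rw [hSz]; norm_num; linarith
  have e6 : ∀ᶠ t in nhds (0 : ℝ), t < 1 / 4 := eventually_lt_nhds (by norm_num)
  obtain ⟨t, ⟨h1, h2, h3, h4, h5, h6⟩, ht⟩ :=
    ((((e1.and (e2.and (e3.and (e4.and (e5.and e6))))).filter_mono
      nhdsWithin_le_nhds).and (self_mem_nhdsWithin (s := Set.Ioi (0 : ℝ)))).exists)
  have ht : 0 < t := ht
  have hu0 : 0 < t ^ 2 := by positivity
  have hu1 : t ^ 2 < 1 / 16 := by nlinarith only [ht, h6]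
  have hS : 0 ≤ S t := Finset.sum_nonneg (by intros; positivity)
  have hα : 0 < 1 - t ^ 2 := by linarith
  have hq : 0 < 1 - t ^ 2 / 4 := by linarith
  have hKi : 1 / (4 / t ^ 2) = t ^ 2 / 4 := by field_simp
  have hαK : (1 - t ^ 2) / (4 / t ^ 2) = (1 - t ^ 2) * t ^ 2 / 4 := by field_simp
  have hD : 0 < 2 * (1 - (1 - t ^ 2) * t ^ 2 / 4) := by nlinarith only [hu0, hu1, hα]
  have hsum : ∑ i ∈ Finset.Icc 1 (l + 1 - 1), (s i - c * t) ^ 2 + (s (l + 1) + c * t) ^ 2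
      = S t + 4 * s (l + 1) * (c * t) := by
    simp only [S]
    rw [Finset.sum_Icc_succ_top (by omega)]
    simp only [Nat.add_sub_cancel]
    ring
  have hXpos : 0 < X t := by
    simp only [X]
    have : 0 ≤ S t / (2 * (1 - t ^ 2) * (1 - t ^ 2 / 4) ^ 3) := by positivity
    linarith
  refine ⟨1 - t ^ 2, 4 / t ^ 2, c * t, X t, t ^ 2, hα, by positivity, by positivity, hXpos, hu0,
    ?_, ?_, ?_, ?_, ?_⟩
  · rw [hαK]
    refine lt_min h1 ?_
    have : 2 * (1 - t ^ 2) / (N * (4 / t ^ 2)) = t ^ 2 * ((1 - t ^ 2) / (2 * N)) := by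
      field_simp; ring
    rw [this, mul_pow, mul_assoc, mul_comm]
    exact mul_lt_mul_of_pos_left h2 hu0
  · rw [hαK, hsum]
    refine lt_min ?_ h4
    rw [lt_div_iff₀ hD]
    have hb : S t / (2 * (1 - t ^ 2) * (1 - t ^ 2 / 4) ^ 3) ≤ S t * (1 + 4 * t ^ 2) / 2 := by
      rw [div_le_iff₀ (by positivity)]
      have hc4 := aux_bound (t ^ 2) hu0 hu1
      have hc5 := mul_le_mul_of_nonneg_left hc4 hS
      have hc6 : S t * (1 + 4 * t ^ 2) / 2 * (2 * (1 - t ^ 2) * (1 - t ^ 2 / 4) ^ 3) =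
        S t * ((1 + 4 * t ^ 2) * ((1 - t ^ 2) * (1 - t ^ 2 / 4) ^ 3)) := by ring
      rw [hc6]
      linarith
    have hX2 : X t * (2 * (1 - (1 - t ^ 2) * t ^ 2 / 4)) ≤ X t * 2 := by
      apply mul_le_mul_of_nonneg_left _ hXpos.le
      linarith only [mul_pos hα hu0]
    have hX3 : X t ≤ 2 * t ^ 2 + S t * (1 + 4 * t ^ 2) / 2 := by
      simp only [X]; linarith
    have h7 := mul_lt_mul_of_pos_left h3 ht
    have h8 : t * (t * (1 + S t)) = t ^ 2 + S t * t ^ 2 := by ring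
    have h9 : 4 * s (l + 1) * (c * t) = 4 * (t * (s (l + 1) * c)) := by ring
    have h10 : S t * (1 + 4 * t ^ 2) / 2 = S t / 2 + 2 * (S t * t ^ 2) := by ring
    rw [h9]
    linarith
  · rw [hKi]
    simp only [X]
    change t ^ 2 + S t / (2 * (1 - t ^ 2) * (1 - t ^ 2 / 4) ^ 3) < _
    linarith
  · rw [div_le_div_iff₀ (by linarith) hu0]
    have h11 : 4 * (1 - (1 - t ^ 2) - t ^ 2 / 2) - 2 * (1 - t ^ 2) * t ^ 2 = 2 * (t ^ 2) ^ 2 := by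
      ring
    have h12 : 0 ≤ 2 * (t ^ 2) ^ 2 := by positivity
    linarith only [h11, h12]
  · rw [hKi]
    exact h5

end
end
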